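/- arXiv:1103.3236 — 2 statements merged into one kernel-verified Lean document; each statement's English description precedes it below -/
import Mathlib

section
/- Let f, g : ℂⁿ → ℂ be holomorphic map-germs at 0 with f(0) = g(0) = 0, neither constant, having no common factor, such that f·conj(g) is not constant and has an isolated critical value at 0. Then the real-analytic map f·conj(g) : ℂⁿ → ℂ is locally surjective at 0: the image of every neighbourhood of 0 in ℂⁿ contains a neighbourhood of 0 in ℂ. -/
open Filter Function

/-!
On a root of `f = μ g` the function `f · conj g` takes the value `μ ‖g‖²`, so it suffices to find,
for all `μ` on one fixed small circle, roots at which `‖g‖` takes every small positive value.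

Choose a line through the base point on which, after possibly exchanging `f` and `g`, the order of
`f` is finite and at most that of `g`, and let it vary among its parallels. On the central line
`g` is bounded by a multiple of `f`, so that roots of `f = μ g` with `μ` small are zeros of `g`.
If the order of `f` were at most that of `g` at every point of every nearby line, then `g / f`
would be holomorphic on each of these lines, the Cauchy integral formula would make the quotient
differentiable in all directions, and `f` would divide `g` by Osgood's lemma. So some nearby line
carries a zero of `f / g`; near it, all `μ` on a small circle have roots at which `‖g‖` is bounded
below. By Hurwitz's theorem roots persist from line to line, and since the family of lines is
connected, `‖g‖` takes on roots every value between zero and that lower bound.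
-/

open Complex Metric MeasureTheory Set Topology
open scoped ComplexConjugate

section TorusIntegral

variable {F : Type*} [NormedAddCommGroup F] [NormedSpace ℂ F] {n : ℕ} {c w : Fin n → ℂ}
  {R : Fin n → ℝ}

theorem continuous_torusMap (c : Fin n → ℂ) (R : Fin n → ℝ) : Continuous (torusMap c R) := by
  unfold torusMap
  fun_prop

theorem torusMap_apply_mem_sphere (c : Fin n → ℂ) (hR : ∀ i, 0 ≤ R i) (θ : Fin n → ℝ)
    (i : Fin n) : torusMap c R θ i ∈ sphere (c i) (R i) :=
  circleMap_mem_sphere (c i) (hR i) (θ i)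

theorem torusMap_apply_ne (hw : ∀ i, w i ∈ ball (c i) (R i)) (θ : Fin n → ℝ) (i : Fin n) :
    torusMap c R θ i ≠ w i :=
  circleMap_ne_mem_ball (hw i) (θ i)

theorem torusMap_mem_pi_closedBall (c : Fin n → ℂ) (hR : ∀ i, 0 ≤ R i) (θ : Fin n → ℝ) :
    torusMap c R θ ∈ univ.pi fun i ↦ closedBall (c i) (R i) :=
  fun i _ ↦ sphere_subset_closedBall (torusMap_apply_mem_sphere c hR θ i)

theorem continuous_comp_torusMap {X : Type*} [TopologicalSpace X] {f : (Fin n → ℂ) → X}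
    (hR : ∀ i, 0 ≤ R i)
    (hf : ContinuousOn f (univ.pi fun i ↦ closedBall (c i) (R i))) :
    Continuous fun θ ↦ f (torusMap c R θ) :=
  hf.comp_continuous (continuous_torusMap c R) (torusMap_mem_pi_closedBall c hR)

theorem torusIntegrable_prod_sub_inv_smul {f : (Fin n → ℂ) → F}
    (hf : ContinuousOn f (univ.pi fun i ↦ closedBall (c i) (R i)))
    (hw : ∀ i, w i ∈ ball (c i) (R i)) :
    TorusIntegrable (fun x ↦ (∏ i, (x i - w i)⁻¹) • f x) c R := by
  refine Continuous.integrableOn_Icc (.smul (continuous_finsetProd _ fun i _ ↦ .inv₀ ?_ fun θ ↦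
    sub_ne_zero.2 (torusMap_apply_ne hw θ i)) (continuous_comp_torusMap
      (fun i ↦ (pos_of_mem_ball (hw i)).le) hf))
  exact ((continuous_apply i).comp (continuous_torusMap c R)).sub continuous_const

theorem torusIntegral_prod_sub_inv_smul [CompleteSpace F] {f : (Fin n → ℂ) → F}
    (hf : DifferentiableOn ℂ f (univ.pi fun i ↦ closedBall (c i) (R i)))
    (hw : ∀ i, w i ∈ ball (c i) (R i)) :
    (∯ x in T(c, R), (∏ i, (x i - w i)⁻¹) • f x) = (2 * Real.pi * I : ℂ) ^ n • f w := by
  induction n with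
  | zero => simp [torusIntegral_dim0, Subsingleton.elim w c]
  | succ n ih =>
    have hcons {x : ℂ} (hx : x ∈ closedBall (c 0) (R 0)) {y : Fin n → ℂ}
        (hy : y ∈ univ.pi fun i ↦ closedBall (c i.succ) (R i.succ)) :
        (Fin.cons x y : Fin (n + 1) → ℂ) ∈ univ.pi fun i ↦ closedBall (c i) (R i) := by
      simpa [Fin.forall_fin_succ] using And.intro hx hy
    have hinner : ∀ x ∈ sphere (c 0) (R 0),
        (∯ y in T(c ∘ Fin.succ, R ∘ Fin.succ),
          (∏ i, ((Fin.cons x y : Fin (n + 1) → ℂ) i - w i)⁻¹) • f (Fin.cons x y))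
          = (x - w 0)⁻¹ • (2 * Real.pi * I : ℂ) ^ n • f (Fin.cons x fun i ↦ w i.succ) := by
      intro x hx
      rw [← ih (c := c ∘ Fin.succ) (w := fun i ↦ w i.succ) (R := R ∘ Fin.succ)
          (f := fun y ↦ f (Fin.cons x y))
        (hf.comp (t := univ.pi fun i ↦ closedBall (c i) (R i)) (by fun_prop)
          fun y hy ↦ hcons (sphere_subset_closedBall hx) hy) fun i ↦ hw i.succ,
        ← torusIntegral_smul]
      simp only [Fin.prod_univ_succ, Fin.cons_zero, Fin.cons_succ, mul_smul]
    have houter : DifferentiableOn ℂ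
        (fun x ↦ (2 * Real.pi * I : ℂ) ^ n • f (Fin.cons x fun i ↦ w i.succ))
        (closedBall (c 0) (R 0)) :=
      (hf.comp (t := univ.pi fun i ↦ closedBall (c i) (R i)) (by fun_prop) fun x hx ↦ hcons hx
        fun i _ ↦ ball_subset_closedBall (hw i.succ)).const_smul _
    rw [torusIntegral_succ (torusIntegrable_prod_sub_inv_smul hf.continuousOn hw),
      circleIntegral.integral_congr (pos_of_mem_ball (hw 0)).le hinner,
      houter.circleIntegral_sub_inv_smul (hw 0), smul_smul, ← pow_succ']
    congr 2
    exact Fin.cons_self_tail w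

end TorusIntegral

-- Inversion is analytic on the units of the Banach algebra `C(K, ℂ)`, and `u ↦ ∫ u • φ` is a
-- continuous linear map on this algebra.
theorem analyticAt_integral_prod_sub_inv_smul {K ι F : Type*} [TopologicalSpace K] [CompactSpace K]
    [MeasurableSpace K] [BorelSpace K] {μ : Measure K} [Fintype ι] [NormedAddCommGroup F]
    [NormedSpace ℂ F] {a : ι → C(K, ℂ)} {φ : K → F} {z₀ : ι → ℂ} (hφ : Integrable φ μ)
    (ha : ∀ i k, a i k ≠ z₀ i) :
    AnalyticAt ℂ (fun z : ι → ℂ ↦ ∫ k, (∏ i, (a i k - z i)⁻¹) • φ k ∂μ) z₀ := by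
  have hint (u : C(K, ℂ)) : Integrable (fun k ↦ u k • φ k) μ :=
    hφ.bdd_smul ‖u‖ u.continuous.aestronglyMeasurable (.of_forall u.norm_coe_le_norm)
  let L : C(K, ℂ) →L[ℂ] F := LinearMap.mkContinuous
    { toFun := fun u ↦ ∫ k, u k • φ k ∂μ
      map_add' := fun u v ↦ by
        simpa only [ContinuousMap.add_apply, add_smul] using integral_add (hint u) (hint v)
      map_smul' := fun s u ↦ by
        simpa only [ContinuousMap.smul_apply, smul_assoc] using! integral_smul s _ }
    (∫ k, ‖φ k‖ ∂μ) fun u ↦ by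
      rw [mul_comm, ← integral_const_mul]
      refine norm_integral_le_of_norm_le (hφ.norm.const_mul _) (.of_forall fun k ↦ ?_)
      rw [norm_smul]
      gcongr
      exact u.norm_coe_le_norm k
  let b (i : ι) (z : ι → ℂ) : C(K, ℂ) := a i - z i • 1
  have hb (i : ι) : AnalyticAt ℂ (b i) z₀ :=
    analyticAt_const.sub (((ContinuousLinearMap.proj (R := ℂ) i).analyticAt z₀).smul
      analyticAt_const)
  have hunit (i : ι) : IsUnit (b i z₀) :=
    (ContinuousMap.isUnit_iff_forall_ne_zero _).2 fun k ↦ by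
      simpa [b, sub_eq_zero] using ha i k
  have hinv (i : ι) : AnalyticAt ℂ (fun z ↦ Ring.inverse (b i z)) z₀ :=
    (analyticAt_inverse (𝕜 := ℂ) (hunit i).unit).comp_of_eq (hb i) (hunit i).unit_spec.symm
  refine ((L.analyticAt _).comp (Finset.univ.analyticAt_fun_prod fun i _ ↦ hinv i)).congr ?_
  have hnear : ∀ᶠ z in 𝓝 z₀, ∀ i, IsUnit (b i z) := eventually_all.2 fun i ↦
    (hb i).continuousAt.eventually (Units.isOpen.mem_nhds (hunit i))
  filter_upwards [hnear] with z hz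
  refine integral_congr_ae (.of_forall fun k ↦ ?_)
  have hval (i : ι) : Ring.inverse (b i z) k = (a i k - z i)⁻¹ :=
    eq_inv_of_mul_eq_one_right (by
      simpa [b] using congrArg (· k) (Ring.mul_inverse_cancel _ (hz i)))
  simp [hval]

theorem analyticAt_pi_of_eventually_differentiableAt {n : ℕ} {F : Type*} [NormedAddCommGroup F]
    [NormedSpace ℂ F] [CompleteSpace F] {f : (Fin n → ℂ) → F} {c : Fin n → ℂ}
    (hf : ∀ᶠ z in 𝓝 c, DifferentiableAt ℂ f z) : AnalyticAt ℂ f c := by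
  obtain ⟨r, hr, hfr⟩ := nhds_basis_closedBall.eventually_iff.1 hf
  let R : Fin n → ℝ := fun _ ↦ r
  have hd : DifferentiableOn ℂ f (univ.pi fun i ↦ closedBall (c i) (R i)) := by
    rw [← closedBall_pi c hr.le]
    exact fun z hz ↦ (hfr hz).differentiableWithinAt
  let S : Set (Fin n → ℝ) := Icc 0 fun _ ↦ 2 * Real.pi
  have : CompactSpace S := isCompact_iff_compactSpace.1 isCompact_Icc
  have hcont : Continuous fun θ : Fin n → ℝ ↦
      (∏ i, R i * exp (θ i * I) * I : ℂ) • f (torusMap c R θ) :=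
    .smul (by fun_prop) (continuous_comp_torusMap (fun _ ↦ hr.le) hd.continuousOn)
  let a (i : Fin n) : C(S, ℂ) :=
    ⟨fun θ ↦ torusMap c R θ i,
      (continuous_apply i).comp ((continuous_torusMap c R).comp continuous_subtype_val)⟩
  have hint : Integrable (fun θ : S ↦ (∏ i, R i * exp (θ.1 i * I) * I : ℂ) • f (torusMap c R θ))
      (volume.comap Subtype.val) :=
    (integrableOn_iff_comap_subtypeVal measurableSet_Icc).1 hcont.integrableOn_Icc
  have han := analyticAt_integral_prod_sub_inv_smul (a := a) hint fun i θ ↦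
    torusMap_apply_ne (fun _ ↦ mem_ball_self hr) θ.1 i
  refine (han.const_smul (c := ((2 * Real.pi * I : ℂ) ^ n)⁻¹)).congr ?_
  filter_upwards [ball_mem_nhds c hr] with z hz
  rw [ball_pi c hr] at hz
  have hcauchy : (∫ θ : S, (∏ i, (a i θ - z i)⁻¹) •
      (∏ i, R i * exp (θ.1 i * I) * I : ℂ) • f (torusMap c R θ) ∂(volume.comap Subtype.val))
      = (2 * Real.pi * I : ℂ) ^ n • f z := by
    rw [← torusIntegral_prod_sub_inv_smul hd fun i ↦ hz i (mem_univ i), torusIntegral,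
      ← integral_subtype_comap measurableSet_Icc]
    exact integral_congr_ae (.of_forall fun θ ↦ smul_comm _ _ _)
  rw [Pi.smul_apply, hcauchy, inv_smul_smul₀ (pow_ne_zero _ two_pi_I_ne_zero)]

theorem analyticAt_of_eventually_differentiableAt {E F : Type*} [NormedAddCommGroup E]
    [NormedSpace ℂ E] [FiniteDimensional ℂ E] [NormedAddCommGroup F] [NormedSpace ℂ F]
    [CompleteSpace F] {f : E → F} {x : E} (hf : ∀ᶠ z in 𝓝 x, DifferentiableAt ℂ f z) :
    AnalyticAt ℂ f x := by
  let e : E ≃L[ℂ] (Fin (Module.finrank ℂ E) → ℂ) := (Module.finBasis ℂ E).equivFunL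
  have he : AnalyticAt ℂ (f ∘ e.symm) (e x) := by
    refine analyticAt_pi_of_eventually_differentiableAt ?_
    filter_upwards [e.symm.continuous.continuousAt.eventually
      ((e.symm_apply_apply x).symm ▸ hf)] with z hz
    exact hz.comp z e.symm.differentiableAt
  simpa [comp_def] using he.comp (e.analyticAt x)

theorem differentiableAt_circleIntegral {E F : Type*} [NormedAddCommGroup E] [NormedSpace ℂ E]
    [NormedAddCommGroup F] [NormedSpace ℂ F] {Φ : E → ℂ → F} {z₀ : E} {c : ℂ} {R : ℝ}
    (hΦ : ∀ ζ ∈ sphere c |R|, ContDiffAt ℂ 1 (uncurry Φ) (z₀, ζ)) :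
    DifferentiableAt ℂ (fun z ↦ ∮ ζ in C(c, R), Φ z ζ) z₀ := by
  have hK : IsCompact (sphere c |R|) := isCompact_sphere c |R|
  have hmem (θ : ℝ) : circleMap c R θ ∈ sphere c |R| := circleMap_mem_sphere' c R θ
  let D (z : E) (ζ : ℂ) : E →L[ℂ] F := (fderiv ℂ (uncurry Φ) (z, ζ)).comp (.inl ℂ E ℂ)
  have hDcont (ζ : ℂ) (hζ : ζ ∈ sphere c |R|) : ContinuousAt (uncurry D) (z₀, ζ) :=
    ((hΦ ζ hζ).continuousAt_fderiv one_ne_zero).clm_comp continuousAt_const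
  obtain ⟨C, hC⟩ : ∃ C, ∀ ζ ∈ sphere c |R|, ‖D z₀ ζ‖ ≤ C :=
    hK.exists_bound_of_continuousOn fun ζ hζ ↦
      ((hDcont ζ hζ).comp (f := fun ζ ↦ (z₀, ζ)) (by fun_prop)).continuousWithinAt
  have hnear : ∀ᶠ z in 𝓝 z₀, ∀ ζ ∈ sphere c |R|,
      ContDiffAt ℂ 1 (uncurry Φ) (z, ζ) ∧ ‖D z ζ‖ ≤ C + 1 := by
    refine hK.eventually_forall_of_forall_eventually fun ζ hζ ↦ ?_
    filter_upwards [(hΦ ζ hζ).eventually (by simp),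
      (hDcont ζ hζ).norm.eventually_lt_const ((hC ζ hζ).trans_lt (lt_add_one C))] with y hy hy'
    exact ⟨hy, hy'.le⟩
  have hderiv : Continuous (deriv (circleMap c R)) :=
    (contDiff_circleMap c R (n := 1)).continuous_deriv le_rfl
  have hΦcont (z : E) (hz : ∀ ζ ∈ sphere c |R|, ContDiffAt ℂ 1 (uncurry Φ) (z, ζ)) :
      Continuous fun θ ↦ deriv (circleMap c R) θ • Φ z (circleMap c R θ) :=
    hderiv.smul <| continuous_iff_continuousAt.2 fun θ ↦
      (hz _ (hmem θ)).continuousAt.comp (f := fun θ ↦ (z, circleMap c R θ)) (by fun_prop)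
  have hD₀cont : Continuous fun θ ↦ deriv (circleMap c R) θ • D z₀ (circleMap c R θ) :=
    hderiv.smul <| continuous_iff_continuousAt.2 fun θ ↦
      (hDcont _ (hmem θ)).comp (f := fun θ ↦ (z₀, circleMap c R θ)) (by fun_prop)
  refine (intervalIntegral.hasFDerivAt_integral_of_dominated_of_fderiv_le (μ := volume)
    (F' := fun z θ ↦ deriv (circleMap c R) θ • D z (circleMap c R θ))
    (bound := fun _ ↦ |R| * (C + 1)) hnear ?_ ?_ hD₀cont.aestronglyMeasurable
    (.of_forall fun θ _ z hz ↦ ?_) intervalIntegrable_const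
    (.of_forall fun θ _ z hz ↦ ?_)).differentiableAt
  · filter_upwards [hnear] with z hz
    exact (hΦcont z fun ζ hζ ↦ (hz ζ hζ).1).aestronglyMeasurable
  · exact (hΦcont z₀ hΦ).intervalIntegrable _ _
  · rw [norm_smul, deriv_circleMap, norm_mul, norm_I, mul_one, norm_circleMap_zero]
    gcongr
    exact (hz _ (hmem θ)).2
  · exact (HasFDerivAt.comp (f := fun z ↦ (z, circleMap c R θ)) z
      ((hz _ (hmem θ)).1.differentiableAt one_ne_zero).hasFDerivAt
      (hasFDerivAt_prodMk_left z _)).const_smul _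

section AnalyticDvdAt

variable {E : Type*} [NormedAddCommGroup E] [NormedSpace ℂ E]

/-- Divisibility `f ∣ g` in the ring of germs at `x` of complex-analytic functions, stated for
representatives `f` and `g` of the germs. -/
def AnalyticDvdAt (f g : E → ℂ) (x : E) : Prop :=
  ∃ q, AnalyticAt ℂ q x ∧ g =ᶠ[𝓝 x] fun z ↦ f z * q z

theorem AnalyticDvdAt.isBigO {f g : E → ℂ} {x : E} (h : AnalyticDvdAt f g x) : g =O[𝓝 x] f := by
  obtain ⟨q, hq, hgq⟩ := h
  simpa using hgq.trans_isBigO ((Asymptotics.isBigO_refl f _).mul (hq.continuousAt.isBigO_one ℂ))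

theorem analyticDvdAt_of_analyticOrderAt_le {F G : ℂ → ℂ} {w : ℂ} (hF : AnalyticAt ℂ F w)
    (hG : AnalyticAt ℂ G w) (h : analyticOrderAt F w ≤ analyticOrderAt G w) :
    AnalyticDvdAt F G w := by
  by_cases htop : analyticOrderAt F w = ⊤
  · have hG0 : ∀ᶠ ζ in 𝓝 w, G ζ = 0 := analyticOrderAt_eq_top.1 (top_le_iff.1 (htop ▸ h))
    exact ⟨0, analyticAt_const, by simpa [EventuallyEq] using hG0⟩
  obtain ⟨u, hu, hu0, hFu⟩ := hF.analyticOrderAt_ne_top.1 htop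
  obtain ⟨v, hv, hGv⟩ := (natCast_le_analyticOrderAt hG).1
    ((ENat.natCast_toNat htop).le.trans h)
  refine ⟨v / u, hv.div hu hu0, ?_⟩
  filter_upwards [hFu, hGv, hu.continuousAt.eventually_ne hu0] with ζ hFζ hGζ huζ
  rw [hFζ, hGζ, Pi.div_apply, analyticOrderNatAt, smul_mul_assoc, mul_div_cancel₀ _ huζ]

theorem exists_differentiableOn_forall_eq_mul {F G : ℂ → ℂ} {s : Set ℂ}
    (hF : ∀ w ∈ s, ∀ᶠ z in 𝓝[≠] w, F z ≠ 0) (h : ∀ w ∈ s, AnalyticDvdAt F G w) :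
    ∃ Q, DifferentiableOn ℂ Q s ∧ ∀ w ∈ s, G w = F w * Q w := by
  choose! q hq hGq using h
  refine ⟨fun w ↦ q w w, fun w hw ↦ ?_, fun w hw ↦ (hGq w hw).self_of_nhds⟩
  refine (hq w hw).differentiableAt.differentiableWithinAt.congr_of_eventuallyEq ?_ rfl
  filter_upwards [self_mem_nhdsWithin, nhdsWithin_le_nhds (hGq w hw),
    nhdsWithin_le_nhds (eventually_nhdsWithin_iff.1 (hF w hw))] with z hz hGz hFz
  rcases eq_or_ne z w with rfl | hzw
  · rfl
  · exact mul_left_cancel₀ (hFz hzw) ((hGq z hz).self_of_nhds.symm.trans hGz)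

theorem eventually_ne_zero_of_forall_sphere_ne_zero {F : ℂ → ℂ} {c : ℂ} {r : ℝ} (hr : 0 ≤ r)
    (hF : AnalyticOnNhd ℂ F (closedBall c r)) (hF0 : ∀ ζ ∈ sphere c r, F ζ ≠ 0) {w : ℂ}
    (hw : w ∈ closedBall c r) : ∀ᶠ z in 𝓝[≠] w, F z ≠ 0 := by
  by_contra hfreq
  obtain ⟨ζ, hζ⟩ := NormedSpace.sphere_nonempty (x := c).2 hr
  exact hF0 ζ hζ (hF.eqOn_zero_of_preconnected_of_frequently_eq_zero
    (convex_closedBall c r).isPreconnected hw (by simpa only [not_eventually, not_not] using hfreq)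
    (sphere_subset_closedBall hζ))

theorem eq_mul_circleIntegral_div_of_analyticDvdAt {F G : ℂ → ℂ} {c w : ℂ} {r : ℝ}
    (hF : AnalyticOnNhd ℂ F (closedBall c r)) (hF0 : ∀ ζ ∈ sphere c r, F ζ ≠ 0)
    (hdvd : ∀ ζ ∈ closedBall c r, AnalyticDvdAt F G ζ) (hw : w ∈ ball c r) :
    G w = F w * ((2 * Real.pi * I)⁻¹ * ∮ ζ in C(c, r), (ζ - w)⁻¹ * (G ζ / F ζ)) := by
  have hr : 0 ≤ r := (pos_of_mem_ball hw).le
  obtain ⟨Q, hQ, hGQ⟩ := exists_differentiableOn_forall_eq_mul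
    (fun _ ↦ eventually_ne_zero_of_forall_sphere_ne_zero hr hF hF0) hdvd
  have hint : (∮ ζ in C(c, r), (ζ - w)⁻¹ * (G ζ / F ζ)) = 2 * Real.pi * I * Q w := by
    rw [← smul_eq_mul, ← hQ.circleIntegral_sub_inv_smul hw]
    refine circleIntegral.integral_congr hr fun ζ hζ ↦ ?_
    rw [hGQ ζ (sphere_subset_closedBall hζ), mul_div_cancel_left₀ _ (hF0 ζ hζ), smul_eq_mul]
  rw [hint, inv_mul_cancel_left₀ two_pi_I_ne_zero, hGQ w (ball_subset_closedBall hw)]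

theorem eventually_forall_mem_add_smul {K : Set ℂ} (hK : IsCompact K) {P : E → Prop} {p v : E}
    (hP : ∀ ζ ∈ K, ∀ᶠ y in 𝓝 (p + ζ • v), P y) : ∀ᶠ z in 𝓝 p, ∀ ζ ∈ K, P (z + ζ • v) :=
  hK.eventually_forall_of_forall_eventually fun ζ hζ ↦
    (show ContinuousAt (fun y : E × ℂ ↦ y.1 + y.2 • v) (p, ζ) by fun_prop).eventually (hP ζ hζ)

theorem analyticAt_comp_add_smul {f : E → ℂ} {z v : E} {ζ : ℂ} (hf : AnalyticAt ℂ f (z + ζ • v)) :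
    AnalyticAt ℂ (fun ξ : ℂ ↦ f (z + ξ • v)) ζ :=
  hf.fun_comp (f := fun ξ : ℂ ↦ z + ξ • v) (by fun_prop)

theorem analyticDvdAt_of_forall_line [FiniteDimensional ℂ E] {f g : E → ℂ} {p v : E} {r : ℝ}
    (hr : 0 < r) (hf : ∀ ζ ∈ closedBall (0 : ℂ) r, AnalyticAt ℂ f (p + ζ • v))
    (hg : ∀ ζ ∈ sphere (0 : ℂ) r, AnalyticAt ℂ g (p + ζ • v))
    (hf0 : ∀ ζ ∈ sphere (0 : ℂ) r, f (p + ζ • v) ≠ 0)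
    (hdvd : ∀ᶠ z in 𝓝 p, ∀ ζ ∈ closedBall (0 : ℂ) r,
      AnalyticDvdAt (fun ξ ↦ f (z + ξ • v)) (fun ξ ↦ g (z + ξ • v)) ζ) :
    AnalyticDvdAt f g p := by
  have hfan : ∀ᶠ z in 𝓝 p, ∀ ζ ∈ closedBall (0 : ℂ) r, AnalyticAt ℂ f (z + ζ • v) :=
    eventually_forall_mem_add_smul (isCompact_closedBall 0 r) fun ζ hζ ↦
      (hf ζ hζ).eventually_analyticAt
  have hsphere : ∀ᶠ z in 𝓝 p, ∀ ζ ∈ sphere (0 : ℂ) r,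
      AnalyticAt ℂ g (z + ζ • v) ∧ f (z + ζ • v) ≠ 0 :=
    eventually_forall_mem_add_smul (isCompact_sphere 0 r) fun ζ hζ ↦
      (hg ζ hζ).eventually_analyticAt.and
        ((hf ζ (sphere_subset_closedBall hζ)).continuousAt.eventually_ne (hf0 ζ hζ))
  refine ⟨fun z ↦ (2 * Real.pi * I)⁻¹ *
    ∮ ζ in C(0, r), (ζ - 0)⁻¹ * (g (z + ζ • v) / f (z + ζ • v)), ?_, ?_⟩
  · refine analyticAt_const.mul (analyticAt_of_eventually_differentiableAt ?_)
    filter_upwards [hfan, hsphere] with z hfz hz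
    refine differentiableAt_circleIntegral fun ζ hζ ↦ ?_
    rw [abs_of_pos hr] at hζ
    have hζ0 : ζ - 0 ≠ 0 := sub_ne_zero.2 (ne_of_mem_sphere hζ hr.ne')
    have hline : AnalyticAt ℂ (fun y : E × ℂ ↦ y.1 + y.2 • v) (z, ζ) :=
      analyticAt_fst.add (analyticAt_snd.smul analyticAt_const)
    have hquot : AnalyticAt ℂ
        (fun y : E × ℂ ↦ (y.2 - 0)⁻¹ * (g (y.1 + y.2 • v) / f (y.1 + y.2 • v))) (z, ζ) :=
      ((analyticAt_snd.sub analyticAt_const).inv hζ0).mul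
        (((hz ζ hζ).1.fun_comp (x := (z, ζ)) hline).div
          ((hfz ζ (sphere_subset_closedBall hζ)).fun_comp (x := (z, ζ)) hline) (hz ζ hζ).2)
    exact hquot.contDiffAt
  · filter_upwards [hfan, hsphere, hdvd] with z hfz hz hdvdz
    simpa using eq_mul_circleIntegral_div_of_analyticDvdAt
      (fun ζ hζ ↦ analyticAt_comp_add_smul (hfz ζ hζ)) (fun ζ hζ ↦ (hz ζ hζ).2) hdvdz
      (mem_ball_self hr)

end AnalyticDvdAt

section Roots

theorem exists_eq_zero_of_norm_lt_of_frontier {φ : ℂ → ℂ} {U : Set ℂ} {w : ℂ} {m : ℝ}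
    (hU : Bornology.IsBounded U) (hφ : DiffContOnCl ℂ φ U) (hw : w ∈ U) (hφw : ‖φ w‖ < m)
    (hm : ∀ z ∈ frontier U, m ≤ ‖φ z‖) : ∃ z ∈ U, φ z = 0 := by
  by_contra! hne
  have hm0 : 0 < m := (norm_nonneg _).trans_lt hφw
  have hcl : ∀ z ∈ closure U, φ z ≠ 0 := fun z hz ↦ by
    by_cases hzU : z ∈ U
    · exact hne z hzU
    · exact norm_pos_iff.1 (hm0.trans_le (hm z ⟨hz, fun hint ↦ hzU (interior_subset hint)⟩))
  have hinv : ‖(φ w)⁻¹‖ ≤ m⁻¹ :=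
    norm_le_of_forall_mem_frontier_norm_le hU (hφ.inv hcl) (fun z hz ↦ by
      simpa using inv_anti₀ hm0 (hm z hz)) (subset_closure hw)
  rw [norm_inv, inv_le_inv₀ (norm_pos_iff.2 (hne w hw)) hm0] at hinv
  exact hinv.not_gt hφw

variable {X : Type*} [TopologicalSpace X]

-- A form of Hurwitz's theorem.
theorem eventually_exists_eq_zero {φ : X → ℂ → ℂ} {x₀ : X} {w₀ : ℂ} {N : Set (X × ℂ)}
    (hcont : ∀ᶠ y in 𝓝 (x₀, w₀), ContinuousAt (uncurry φ) y)
    (hdiff : ∀ᶠ y in 𝓝 (x₀, w₀), DifferentiableAt ℂ (φ y.1) y.2)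
    (hzero : φ x₀ w₀ = 0) (hisolated : ∀ᶠ z in 𝓝[≠] w₀, φ x₀ z ≠ 0) (hN : N ∈ 𝓝 (x₀, w₀)) :
    ∀ᶠ x in 𝓝 x₀, ∃ w, (x, w) ∈ N ∧ φ x w = 0 := by
  obtain ⟨P, hP, Q, hQ, hPQ⟩ := eventually_prod_iff.1
    (nhds_prod_eq (x := x₀) (y := w₀) ▸ (hcont.and (hdiff.and hN)))
  obtain ⟨ρ, hρ, hball⟩ := nhds_basis_closedBall.eventually_iff.1
    (hQ.and (eventually_nhdsWithin_iff.1 hisolated))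
  have hcontAt (z : ℂ) (hz : z ∈ closedBall w₀ ρ) : ContinuousAt (uncurry φ) (x₀, z) :=
    (hPQ hP.self_of_nhds (hball hz).1).1
  obtain ⟨m, hm0, hm⟩ := (isCompact_sphere w₀ ρ).exists_forall_le' (f := fun z ↦ ‖φ x₀ z‖)
    (fun z hz ↦ ((hcontAt z (sphere_subset_closedBall hz)).comp (f := fun z ↦ (x₀, z))
      (by fun_prop)).norm.continuousWithinAt)
    (a := 0) fun z hz ↦ norm_pos_iff.2
      ((hball (sphere_subset_closedBall hz)).2 (ne_of_mem_sphere hz hρ.ne'))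
  have hsphere : ∀ᶠ x in 𝓝 x₀, ∀ z ∈ sphere w₀ ρ, m / 2 < ‖φ x z‖ :=
    (isCompact_sphere w₀ ρ).eventually_forall_of_forall_eventually fun z hz ↦
      (hcontAt z (sphere_subset_closedBall hz)).norm.eventually_const_lt
        ((half_lt_self hm0).trans_le (hm z hz))
  have hcenter : ∀ᶠ x in 𝓝 x₀, ‖φ x w₀‖ < m / 2 :=
    ((hcontAt w₀ (mem_closedBall_self hρ.le)).comp (f := fun x ↦ (x, w₀))
      (by fun_prop)).norm.eventually_lt_const (by simpa [hzero] using half_pos hm0)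
  filter_upwards [hP, hsphere, hcenter] with x hPx hxs hxc
  obtain ⟨w, hw, hφw⟩ := exists_eq_zero_of_norm_lt_of_frontier isBounded_ball
    (DifferentiableOn.diffContOnCl fun z hz ↦ (hPQ hPx
      (hball (closure_ball_subset_closedBall hz)).1).2.1.differentiableWithinAt)
    (mem_ball_self hρ) hxc fun z hz ↦ (hxs z (frontier_ball_subset_sphere hz)).le
  exact ⟨w, (hPQ hPx (hball (ball_subset_closedBall hw)).1).2.2, hφw⟩

theorem isClosed_setOf_exists_eq_zero_and_le {Y Z : Type*} [TopologicalSpace Y]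
    [TopologicalSpace Z] [T2Space Z] [Zero Z] {S : Set Y} {φ : X → Y → Z} {γ : X → Y → ℝ} {β : ℝ}
    (hS : IsCompact S) (hφ : ∀ x, ∀ ζ ∈ S, ContinuousAt (uncurry φ) (x, ζ))
    (hγ : ∀ x, ∀ ζ ∈ S, ContinuousAt (uncurry γ) (x, ζ)) :
    IsClosed {x | ∃ ζ ∈ S, φ x ζ = 0 ∧ β ≤ γ x ζ} := by
  have : CompactSpace S := isCompact_iff_compactSpace.1 hS
  have hval : Continuous fun y : X × S ↦ (y.1, (y.2 : Y)) := by fun_prop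
  have hφ' : Continuous fun y : X × S ↦ φ y.1 y.2 := continuous_iff_continuousAt.2 fun y ↦
    (hφ y.1 y.2 y.2.2).comp (f := fun y : X × S ↦ (y.1, (y.2 : Y))) hval.continuousAt
  have hγ' : Continuous fun y : X × S ↦ γ y.1 y.2 := continuous_iff_continuousAt.2 fun y ↦
    (hγ y.1 y.2 y.2.2).comp (f := fun y : X × S ↦ (y.1, (y.2 : Y))) hval.continuousAt
  have himage : {x | ∃ ζ ∈ S, φ x ζ = 0 ∧ β ≤ γ x ζ}
      = Prod.fst '' {y : X × S | φ y.1 y.2 = 0 ∧ β ≤ γ y.1 y.2} := by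
    ext x
    simp [and_left_comm]
  exact himage ▸ isClosedMap_fst_of_compactSpace _
    ((isClosed_eq hφ' continuous_const).inter (isClosed_le continuous_const hγ'))

variable {F G : X → ℂ → ℂ} {c : ℂ} {r β C : ℝ} {x₀ x₁ : X}

theorem isOpen_setOf_exists_eq_zero_and_lt {φ : X → ℂ → ℂ} {γ : X → ℂ → ℝ}
    (hφ : ∀ x, ∀ ζ ∈ closedBall c r, ContinuousAt (uncurry φ) (x, ζ))
    (hγ : ∀ x, ∀ ζ ∈ closedBall c r, ContinuousAt (uncurry γ) (x, ζ))
    (han : ∀ x, AnalyticOnNhd ℂ (φ x) (closedBall c r))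
    (hsphere : ∀ x, ∀ ζ ∈ sphere c r, φ x ζ ≠ 0) :
    IsOpen {x | ∃ ζ ∈ closedBall c r, φ x ζ = 0 ∧ β < γ x ζ} := by
  rw [isOpen_iff_mem_nhds]
  rintro x ⟨w, hw, hφw, hβ⟩
  have hr : 0 ≤ r := dist_nonneg.trans hw
  have hwball : w ∈ ball c r := (lt_or_eq_of_le hw).resolve_right fun h ↦ hsphere x w h hφw
  have hnear : ∀ᶠ y in 𝓝 (x, w), y.2 ∈ closedBall c r :=
    continuousAt_snd.eventually (closedBall_mem_nhds_of_mem hwball)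
  filter_upwards [eventually_exists_eq_zero (hnear.mono fun y hy ↦ hφ y.1 y.2 hy)
    (hnear.mono fun y hy ↦ (han y.1 y.2 hy).differentiableAt) hφw
    (eventually_ne_zero_of_forall_sphere_ne_zero hr (han x) (hsphere x) hw)
    (hnear.and ((hγ x w hw).eventually_const_lt hβ))] with x' ⟨w', hw', hφw'⟩
  exact ⟨w', hw'.1, hφw', hw'.2⟩

theorem exists_eq_zero_and_eq_of_preconnectedSpace [PreconnectedSpace X] {φ : X → ℂ → ℂ}
    {γ : X → ℂ → ℝ}
    (hφ : ∀ x, ∀ ζ ∈ closedBall c r, ContinuousAt (uncurry φ) (x, ζ))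
    (hγ : ∀ x, ∀ ζ ∈ closedBall c r, ContinuousAt (uncurry γ) (x, ζ))
    (han : ∀ x, AnalyticOnNhd ℂ (φ x) (closedBall c r))
    (hsphere : ∀ x, ∀ ζ ∈ sphere c r, φ x ζ ≠ 0)
    (h₀ : ∀ ζ ∈ closedBall c r, φ x₀ ζ = 0 → γ x₀ ζ < β)
    (h₁ : ∃ ζ ∈ closedBall c r, φ x₁ ζ = 0 ∧ β ≤ γ x₁ ζ) :
    ∃ x, ∃ ζ ∈ closedBall c r, φ x ζ = 0 ∧ γ x ζ = β := by
  by_contra! hne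
  have hset : {x | ∃ ζ ∈ closedBall c r, φ x ζ = 0 ∧ β ≤ γ x ζ}
      = {x | ∃ ζ ∈ closedBall c r, φ x ζ = 0 ∧ β < γ x ζ} := by
    ext x
    refine exists_congr fun ζ ↦ and_congr_right fun hζ ↦ and_congr_right fun hφζ ↦ ?_
    exact (hne x ζ hζ hφζ).symm.le_iff_lt
  have hclopen : IsClopen {x | ∃ ζ ∈ closedBall c r, φ x ζ = 0 ∧ β ≤ γ x ζ} :=
    ⟨isClosed_setOf_exists_eq_zero_and_le (isCompact_closedBall c r) hφ hγ,
      hset ▸ isOpen_setOf_exists_eq_zero_and_lt hφ hγ han hsphere⟩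
  obtain ⟨ζ, hζ, hφζ, hβ⟩ := hclopen.eq_univ ⟨x₁, h₁⟩ ▸ mem_univ x₀
  exact (h₀ ζ hζ hφζ).not_ge hβ

theorem exists_eq_mul_and_norm_eq [PreconnectedSpace X] {μ : ℂ}
    (hFc : ∀ x, ∀ ζ ∈ closedBall c r, ContinuousAt (uncurry F) (x, ζ))
    (hGc : ∀ x, ∀ ζ ∈ closedBall c r, ContinuousAt (uncurry G) (x, ζ))
    (hF : ∀ x, AnalyticOnNhd ℂ (F x) (closedBall c r))
    (hG : ∀ x, AnalyticOnNhd ℂ (G x) (closedBall c r))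
    (hsphere : ∀ x, ∀ ζ ∈ sphere c r, ‖G x ζ‖ < C * ‖F x ζ‖)
    (h₀ : ∀ ζ ∈ closedBall c r, ‖G x₀ ζ‖ ≤ C * ‖F x₀ ζ‖) (hμ : ‖μ‖ * C < 1) (hβ : 0 < β)
    (h₁ : ∃ ζ ∈ closedBall c r, F x₁ ζ = μ * G x₁ ζ ∧ β ≤ ‖G x₁ ζ‖) :
    ∃ x, ∃ ζ ∈ closedBall c r, F x ζ = μ * G x ζ ∧ ‖G x ζ‖ = β := by
  have hnorm {x : X} {ζ : ℂ} (h : F x ζ = μ * G x ζ) :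
      C * ‖F x ζ‖ = ‖μ‖ * C * ‖G x ζ‖ := by rw [h, norm_mul]; ring
  simp only [← sub_eq_zero (b := μ * _)] at h₁ ⊢
  refine exists_eq_zero_and_eq_of_preconnectedSpace (x₀ := x₀) (γ := fun x ζ ↦ ‖G x ζ‖)
    (fun x ζ hζ ↦ (hFc x ζ hζ).sub (continuousAt_const.mul (hGc x ζ hζ)))
    (fun x ζ hζ ↦ (hGc x ζ hζ).norm)
    (fun x ζ hζ ↦ (hF x ζ hζ).sub (analyticAt_const.mul (hG x ζ hζ))) (fun x ζ hζ h ↦ ?_)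
    (fun ζ hζ h ↦ ?_) h₁
  · exact (hsphere x ζ hζ).not_ge ((hnorm (sub_eq_zero.1 h)).trans_le
      (mul_le_of_le_one_left (norm_nonneg _) hμ.le))
  · have hG0 : ‖G x₀ ζ‖ ≤ 0 := le_of_not_gt fun hpos ↦ (h₀ ζ hζ).not_gt
      ((hnorm (sub_eq_zero.1 h)).trans_lt (mul_lt_of_lt_one_left hpos hμ))
    exact hG0.trans_lt hβ

theorem eventually_exists_mul_conj_eq [PreconnectedSpace X] {l e : ℝ}
    (hFc : ∀ x, ∀ ζ ∈ closedBall c r, ContinuousAt (uncurry F) (x, ζ))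
    (hGc : ∀ x, ∀ ζ ∈ closedBall c r, ContinuousAt (uncurry G) (x, ζ))
    (hF : ∀ x, AnalyticOnNhd ℂ (F x) (closedBall c r))
    (hG : ∀ x, AnalyticOnNhd ℂ (G x) (closedBall c r))
    (hsphere : ∀ x, ∀ ζ ∈ sphere c r, ‖G x ζ‖ < C * ‖F x ζ‖)
    (h₀ : ∀ ζ ∈ closedBall c r, ‖G x₀ ζ‖ ≤ C * ‖F x₀ ζ‖) (hl : 0 < l) (hlC : l * C < 1)
    (he : 0 < e) (h₁ : ∀ μ : ℂ, ‖μ‖ = l →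
      ∃ ζ ∈ closedBall c r, F x₁ ζ = μ * G x₁ ζ ∧ e ≤ ‖G x₁ ζ‖) :
    ∀ᶠ t in 𝓝[≠] (0 : ℂ), ∃ x, ∃ ζ ∈ closedBall c r, F x ζ * conj (G x ζ) = t := by
  have hsmall : ∀ᶠ t in 𝓝[≠] (0 : ℂ), ‖t‖ < l * e ^ 2 :=
    nhdsWithin_le_nhds (continuous_norm.continuousAt.eventually_lt_const
      (norm_zero.trans_lt (mul_pos hl (pow_pos he 2))))
  filter_upwards [hsmall, self_mem_nhdsWithin] with t ht ht0
  have htpos : 0 < ‖t‖ := norm_pos_iff.2 ht0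
  let μ : ℂ := l * (t / ‖t‖)
  have hμ : ‖μ‖ = l := by simp [μ, htpos.ne', abs_of_pos hl]
  have hβe : √(‖t‖ / l) ≤ e := Real.sqrt_le_iff.2 ⟨he.le, (div_le_iff₀' hl).2 ht.le⟩
  obtain ⟨ζ₁, hζ₁, hFG₁, hG₁⟩ := h₁ μ hμ
  obtain ⟨x, ζ, hζ, hFG, hnorm⟩ := exists_eq_mul_and_norm_eq hFc hGc hF hG hsphere h₀
    (hμ.symm ▸ hlC) (Real.sqrt_pos.2 (div_pos htpos hl)) ⟨ζ₁, hζ₁, hFG₁, hβe.trans hG₁⟩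
  refine ⟨x, ζ, hζ, ?_⟩
  rw [hFG, mul_assoc, mul_conj', hnorm, ← ofReal_pow, Real.sq_sqrt (by positivity)]
  have : (l : ℂ) ≠ 0 := ofReal_ne_zero.2 hl.ne'
  have : (‖t‖ : ℂ) ≠ 0 := ofReal_ne_zero.2 htpos.ne'
  simp only [μ, ofReal_div]
  field_simp

theorem eventually_exists_forall_exists_eq_mul {F G : ℂ → ℂ} {w₀ : ℂ} {N : Set ℂ}
    (hF : AnalyticAt ℂ F w₀) (hG : AnalyticAt ℂ G w₀)
    (hlt : analyticOrderAt G w₀ < analyticOrderAt F w₀) (htop : analyticOrderAt F w₀ ≠ ⊤)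
    (hN : N ∈ 𝓝 w₀) :
    ∀ᶠ l in 𝓝[>] (0 : ℝ), ∃ e > 0, ∀ μ : ℂ, ‖μ‖ = l → ∃ w ∈ N, F w = μ * G w ∧ e ≤ ‖G w‖ := by
  obtain ⟨M, hM, hFM⟩ := analyticDvdAt_of_analyticOrderAt_le hG hF hlt.le
  have horder : analyticOrderAt F w₀ = analyticOrderAt G w₀ + analyticOrderAt M w₀ := by
    rw [analyticOrderAt_congr hFM, ← analyticOrderAt_mul hG hM]; rfl
  have hM0 : M w₀ = 0 := hM.analyticOrderAt_ne_zero.1 fun h ↦ by simp [horder, h] at hlt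
  have hopen : 𝓝 0 ≤ map M (𝓝 w₀) := by
    refine hM0 ▸ hM.eventually_constant_or_nhds_le_map_nhds.resolve_left fun h ↦ htop ?_
    have hMtop : analyticOrderAt M w₀ = ⊤ := analyticOrderAt_eq_top.2 (by simpa only [hM0] using h)
    rw [horder, hMtop, add_top]
  have hG0 : ∀ᶠ w in 𝓝[≠] w₀, G w ≠ 0 :=
    hG.eventually_eq_zero_or_eventually_ne_zero.resolve_left fun h ↦
      hlt.ne_top (analyticOrderAt_eq_top.2 h)
  obtain ⟨ρ, hρ, hball⟩ := nhds_basis_closedBall.eventually_iff.1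
    ((hG.eventually_analyticAt.and hM.eventually_analyticAt).and
      ((hFM.and (eventually_nhdsWithin_iff.1 hG0)).and hN))
  have hGcont : ContinuousOn G (closedBall w₀ ρ) := fun w hw ↦
    (hball hw).1.1.continuousAt.continuousWithinAt
  have hMcont : ContinuousOn M (closedBall w₀ ρ) := fun w hw ↦
    (hball hw).1.2.continuousAt.continuousWithinAt
  obtain ⟨δ, hδ, hδM⟩ := Metric.mem_nhds_iff.1 (hopen (image_mem_map (closedBall_mem_nhds w₀ hρ)))
  filter_upwards [Ioo_mem_nhdsGT hδ] with l ⟨hl, hlδ⟩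
  have hK : IsCompact (closedBall w₀ ρ ∩ M ⁻¹' sphere 0 l) :=
    (isCompact_closedBall w₀ ρ).of_isClosed_subset
      (hMcont.preimage_isClosed_of_isClosed isClosed_closedBall isClosed_sphere) inter_subset_left
  obtain ⟨e, he, heG⟩ := hK.exists_forall_le' (hGcont.norm.mono inter_subset_left) (a := 0)
    fun w hw ↦ norm_pos_iff.2 <| (hball hw.1).2.1.2 <| by
      rintro rfl
      exact ne_of_mem_sphere hw.2 hl.ne' hM0
  refine ⟨e, he, fun μ hμ ↦ ?_⟩
  obtain ⟨w, hw, rfl⟩ := hδM (mem_ball_zero_iff.2 (hμ.trans_lt hlδ))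
  exact ⟨w, (hball hw).2.2, (hball hw).2.1.1.trans (mul_comm _ _),
    heG w ⟨hw, mem_sphere_zero_iff_norm.2 hμ⟩⟩

end Roots

section LocallySurjective

variable {E : Type*} [NormedAddCommGroup E] [NormedSpace ℂ E] {f g : E → ℂ} {p v : E} {r : ℝ}

theorem exists_analyticOrderAt_add_smul_ne_top (hf : AnalyticAt ℂ f p)
    (hf0 : ¬∀ᶠ z in 𝓝 p, f z = 0) :
    ∃ v : E, analyticOrderAt (fun ξ : ℂ ↦ f (p + ξ • v)) 0 ≠ ⊤ := by
  obtain ⟨ε, hε, hfε⟩ := nhds_basis_ball.eventually_iff.1 hf.eventually_analyticAt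
  obtain ⟨z, hz, hfz⟩ := ((not_eventually.1 hf0).and_eventually (ball_mem_nhds p hε)).exists
    |>.imp fun _ h ↦ h.symm
  refine ⟨z - p, fun htop ↦ hfz ?_⟩
  have hline : AnalyticOnNhd ℂ (fun ξ : ℂ ↦ f (p + ξ • (z - p))) (closedBall 0 1) := fun ξ hξ ↦ by
    refine analyticAt_comp_add_smul (hfε (mem_ball_iff_norm.2 ?_))
    rw [add_sub_cancel_left, norm_smul]
    exact (mul_le_of_le_one_left (norm_nonneg _) (mem_closedBall_zero_iff.1 hξ)).trans_lt
      (mem_ball_iff_norm.1 hz)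
  simpa using hline.eqOn_zero_of_preconnected_of_eventuallyEq_zero
    (convex_closedBall 0 1).isPreconnected (mem_closedBall_self zero_le_one)
    (analyticOrderAt_eq_top.1 htop) (x := 1) (by simp)

theorem frequently_exists_analyticOrderAt_lt [FiniteDimensional ℂ E] (hr : 0 < r)
    (hf : ∀ ζ ∈ closedBall (0 : ℂ) r, AnalyticAt ℂ f (p + ζ • v))
    (hg : ∀ ζ ∈ closedBall (0 : ℂ) r, AnalyticAt ℂ g (p + ζ • v))
    (hf0 : ∀ ζ ∈ sphere (0 : ℂ) r, f (p + ζ • v) ≠ 0) (hfg : ¬AnalyticDvdAt f g p) :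
    ∃ᶠ z in 𝓝 p, ∃ ζ ∈ closedBall (0 : ℂ) r,
      analyticOrderAt (fun ξ : ℂ ↦ g (z + ξ • v)) ζ
        < analyticOrderAt (fun ξ : ℂ ↦ f (z + ξ • v)) ζ := by
  intro hle
  refine hfg (analyticDvdAt_of_forall_line hr hf
    (fun ζ hζ ↦ hg ζ (sphere_subset_closedBall hζ)) hf0 ?_)
  filter_upwards [hle,
    eventually_forall_mem_add_smul (isCompact_closedBall 0 r) fun ζ hζ ↦
      (hf ζ hζ).eventually_analyticAt.and (hg ζ hζ).eventually_analyticAt] with z hz hanz ζ hζ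
  exact analyticDvdAt_of_analyticOrderAt_le (analyticAt_comp_add_smul (hanz ζ hζ).1)
    (analyticAt_comp_add_smul (hanz ζ hζ).2) (not_lt.1 fun hlt ↦ hz ⟨ζ, hζ, hlt⟩)

theorem eventually_exists_mul_conj_eq_of_analyticOrderAt_lt {U : Set E} {z₁ : E} {ζ₁ : ℂ} {C : ℝ}
    (hU : IsPreconnected U) (hp : p ∈ U) (hz₁ : z₁ ∈ U)
    (hf : ∀ z ∈ U, ∀ ζ ∈ closedBall (0 : ℂ) r, AnalyticAt ℂ f (z + ζ • v))
    (hg : ∀ z ∈ U, ∀ ζ ∈ closedBall (0 : ℂ) r, AnalyticAt ℂ g (z + ζ • v))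
    (hsphere : ∀ z ∈ U, ∀ ζ ∈ sphere (0 : ℂ) r, ‖g (z + ζ • v)‖ < C * ‖f (z + ζ • v)‖)
    (hle : ∀ ζ ∈ closedBall (0 : ℂ) r, ‖g (p + ζ • v)‖ ≤ C * ‖f (p + ζ • v)‖)
    (hζ₁ : ζ₁ ∈ closedBall (0 : ℂ) r)
    (hlt : analyticOrderAt (fun ξ : ℂ ↦ g (z₁ + ξ • v)) ζ₁
      < analyticOrderAt (fun ξ : ℂ ↦ f (z₁ + ξ • v)) ζ₁) :
    ∀ᶠ t in 𝓝[≠] (0 : ℂ), ∃ z ∈ U, ∃ ζ ∈ closedBall (0 : ℂ) r,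
      f (z + ζ • v) * conj (g (z + ζ • v)) = t := by
  have : PreconnectedSpace U := isPreconnected_iff_preconnectedSpace.1 hU
  have hcont {h : E → ℂ} (hh : ∀ z ∈ U, ∀ ζ ∈ closedBall (0 : ℂ) r, AnalyticAt ℂ h (z + ζ • v))
      (x : U) (ζ : ℂ) (hζ : ζ ∈ closedBall (0 : ℂ) r) :
      ContinuousAt (uncurry fun (x : U) (ξ : ℂ) ↦ h (x + ξ • v)) (x, ζ) :=
    (hh x x.2 ζ hζ).continuousAt.comp (f := fun y : U × ℂ ↦ (y.1 : E) + y.2 • v) (by fun_prop)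
  have hline {h : E → ℂ} (hh : ∀ z ∈ U, ∀ ζ ∈ closedBall (0 : ℂ) r, AnalyticAt ℂ h (z + ζ • v))
      (x : U) : AnalyticOnNhd ℂ (fun ξ : ℂ ↦ h (x + ξ • v)) (closedBall 0 r) :=
    fun ζ hζ ↦ analyticAt_comp_add_smul (hh x x.2 ζ hζ)
  have hf0 : ∀ z ∈ U, ∀ ζ ∈ sphere (0 : ℂ) r, f (z + ζ • v) ≠ 0 := fun z hz ζ hζ h ↦ by
    simpa [h, (norm_nonneg _).not_gt] using hsphere z hz ζ hζ
  have hζ₁ball : ζ₁ ∈ ball (0 : ℂ) r := (lt_or_eq_of_le hζ₁).resolve_right fun h ↦ by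
    rw [(hline hf ⟨z₁, hz₁⟩ ζ₁ hζ₁).analyticOrderAt_eq_zero.2 (hf0 z₁ hz₁ ζ₁ h)] at hlt
    exact not_lt_zero hlt
  have htop : analyticOrderAt (fun ξ : ℂ ↦ f (z₁ + ξ • v)) ζ₁ ≠ ⊤ := fun h ↦ by
    obtain ⟨ζ, hζne, hζ0⟩ := ((eventually_ne_zero_of_forall_sphere_ne_zero
      (dist_nonneg.trans hζ₁) (hline hf ⟨z₁, hz₁⟩) (hf0 z₁ hz₁) hζ₁).and
      (nhdsWithin_le_nhds (analyticOrderAt_eq_top.1 h))).exists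
    exact hζne hζ0
  have hC : ∀ᶠ l in 𝓝[>] (0 : ℝ), l * C < 1 :=
    nhdsWithin_le_nhds (Continuous.tendsto' (by fun_prop) 0 0 (zero_mul C)
      |>.eventually_lt_const one_pos)
  obtain ⟨l, hl, hlC, e, he, hroot⟩ := (eventually_mem_nhdsWithin.and (hC.and
    (eventually_exists_forall_exists_eq_mul (hline hf ⟨z₁, hz₁⟩ ζ₁ hζ₁)
      (hline hg ⟨z₁, hz₁⟩ ζ₁ hζ₁) hlt htop (closedBall_mem_nhds_of_mem hζ₁ball)))).exists
  filter_upwards [eventually_exists_mul_conj_eq (x₀ := ⟨p, hp⟩) (x₁ := ⟨z₁, hz₁⟩) (hcont hf)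
    (hcont hg) (hline hf) (hline hg) (fun x ↦ hsphere x x.2) hle hl hlC he hroot]
    with t ⟨x, ζ, hζ, ht⟩
  exact ⟨x, x.2, ζ, hζ, ht⟩

theorem analyticDvdAt_of_ne_zero (hf : AnalyticAt ℂ f p) (hg : AnalyticAt ℂ g p)
    (hfp : f p ≠ 0) : AnalyticDvdAt f g p := by
  refine ⟨g / f, hg.div hf hfp, ?_⟩
  filter_upwards [hf.continuousAt.eventually_ne hfp] with z hz
  rw [Pi.div_apply, mul_div_cancel₀ _ hz]

theorem exists_radius_forall_norm_le {P : E → Prop} (hf : AnalyticAt ℂ f p)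
    (hg : AnalyticAt ℂ g p) (htop : analyticOrderAt (fun ξ : ℂ ↦ f (p + ξ • v)) 0 ≠ ⊤)
    (hle : analyticOrderAt (fun ξ : ℂ ↦ f (p + ξ • v)) 0
      ≤ analyticOrderAt (fun ξ : ℂ ↦ g (p + ξ • v)) 0) (hP : ∀ᶠ y in 𝓝 p, P y) :
    ∃ r > 0, ∃ C, (∀ ζ ∈ closedBall (0 : ℂ) r,
      P (p + ζ • v) ∧ ‖g (p + ζ • v)‖ ≤ C * ‖f (p + ζ • v)‖) ∧
        ∀ ζ ∈ sphere (0 : ℂ) r, f (p + ζ • v) ≠ 0 := by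
  have hline : Tendsto (fun ξ : ℂ ↦ p + ξ • v) (𝓝 0) (𝓝 p) :=
    Continuous.tendsto' (by fun_prop) _ _ (by simp)
  have hF : AnalyticAt ℂ (fun ξ : ℂ ↦ f (p + ξ • v)) 0 :=
    analyticAt_comp_add_smul (by simpa using hf)
  have hG : AnalyticAt ℂ (fun ξ : ℂ ↦ g (p + ξ • v)) 0 :=
    analyticAt_comp_add_smul (by simpa using hg)
  obtain ⟨C, hC⟩ := (analyticDvdAt_of_analyticOrderAt_le hF hG hle).isBigO.bound
  have hF0 : ∀ᶠ ζ in 𝓝[≠] (0 : ℂ), f (p + ζ • v) ≠ 0 :=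
    hF.eventually_eq_zero_or_eventually_ne_zero.resolve_left (mt analyticOrderAt_eq_top.2 htop)
  obtain ⟨r, hr, hball⟩ := nhds_basis_closedBall.eventually_iff.1
    (((hline.eventually hP).and hC).and (eventually_nhdsWithin_iff.1 hF0))
  exact ⟨r, hr, C, fun ζ hζ ↦ (hball hζ).1, fun ζ hζ ↦
    (hball (sphere_subset_closedBall hζ)).2 (ne_of_mem_sphere hζ hr.ne')⟩

theorem eventually_mem_image_mul_conj_of_norm_le [FiniteDimensional ℂ E] {W : Set E} {C : ℝ}
    (hr : 0 < r) (hf : ∀ ζ ∈ closedBall (0 : ℂ) r, AnalyticAt ℂ f (p + ζ • v))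
    (hg : ∀ ζ ∈ closedBall (0 : ℂ) r, AnalyticAt ℂ g (p + ζ • v))
    (hW : ∀ ζ ∈ closedBall (0 : ℂ) r, W ∈ 𝓝 (p + ζ • v))
    (hC : ∀ ζ ∈ closedBall (0 : ℂ) r, ‖g (p + ζ • v)‖ ≤ C * ‖f (p + ζ • v)‖)
    (hf0 : ∀ ζ ∈ sphere (0 : ℂ) r, f (p + ζ • v) ≠ 0) (hfg : ¬AnalyticDvdAt f g p) :
    ∀ᶠ t in 𝓝[≠] (0 : ℂ), t ∈ (fun z ↦ f z * conj (g z)) '' W := by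
  have hnear : ∀ᶠ z in 𝓝 p, ∀ ζ ∈ closedBall (0 : ℂ) r,
      AnalyticAt ℂ f (z + ζ • v) ∧ AnalyticAt ℂ g (z + ζ • v) ∧ z + ζ • v ∈ W :=
    eventually_forall_mem_add_smul (isCompact_closedBall 0 r) fun ζ hζ ↦
      (hf ζ hζ).eventually_analyticAt.and ((hg ζ hζ).eventually_analyticAt.and (hW ζ hζ))
  have hsphere : ∀ᶠ z in 𝓝 p, ∀ ζ ∈ sphere (0 : ℂ) r,
      ‖g (z + ζ • v)‖ < (C + 1) * ‖f (z + ζ • v)‖ :=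
    eventually_forall_mem_add_smul (isCompact_sphere 0 r) fun ζ hζ ↦ by
      have hζ' : ζ ∈ closedBall (0 : ℂ) r := sphere_subset_closedBall hζ
      refine (hg ζ hζ').continuousAt.norm.eventually_lt
        ((hf ζ hζ').continuousAt.norm.const_mul (C + 1)) ?_
      linarith [hC ζ hζ', norm_pos_iff.2 (hf0 ζ hζ)]
  obtain ⟨η, hη, hball⟩ := nhds_basis_ball.eventually_iff.1 (hnear.and hsphere)
  obtain ⟨z₁, ⟨ζ₁, hζ₁, hlt⟩, hz₁⟩ := ((frequently_exists_analyticOrderAt_lt hr hf hg hf0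
    hfg).and_eventually (ball_mem_nhds p hη)).exists
  filter_upwards [eventually_exists_mul_conj_eq_of_analyticOrderAt_lt
    (convex_ball p η).isPreconnected (mem_ball_self hη) hz₁
    (fun z hz ζ hζ ↦ ((hball hz).1 ζ hζ).1) (fun z hz ζ hζ ↦ ((hball hz).1 ζ hζ).2.1)
    (fun z hz ↦ (hball hz).2) (fun ζ hζ ↦ (hC ζ hζ).trans (by gcongr; linarith)) hζ₁ hlt]
    with t ⟨z, hz, ζ, hζ, hzt⟩
  exact ⟨z + ζ • v, ((hball hz).1 ζ hζ).2.2, hzt⟩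

theorem nhds_zero_le_map_mul_conj_of_analyticOrderAt_le [FiniteDimensional ℂ E]
    (hf : AnalyticAt ℂ f p) (hg : AnalyticAt ℂ g p)
    (htop : analyticOrderAt (fun ξ : ℂ ↦ f (p + ξ • v)) 0 ≠ ⊤)
    (hle : analyticOrderAt (fun ξ : ℂ ↦ f (p + ξ • v)) 0
      ≤ analyticOrderAt (fun ξ : ℂ ↦ g (p + ξ • v)) 0) (hfg : ¬AnalyticDvdAt f g p) :
    𝓝 0 ≤ map (fun z ↦ f z * conj (g z)) (𝓝 p) := by
  refine le_map fun W hW ↦ ?_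
  obtain ⟨r, hr, C, hball, hf0⟩ := exists_radius_forall_norm_le hf hg htop hle
    (hf.eventually_analyticAt.and (hg.eventually_analyticAt.and (eventually_mem_nhds_iff.2 hW)))
  have hne : ∀ᶠ t in 𝓝[≠] (0 : ℂ), t ∈ (fun z ↦ f z * conj (g z)) '' W :=
    eventually_mem_image_mul_conj_of_norm_le hr (fun ζ hζ ↦ (hball ζ hζ).1.1)
      (fun ζ hζ ↦ (hball ζ hζ).1.2.1) (fun ζ hζ ↦ (hball ζ hζ).1.2.2)
      (fun ζ hζ ↦ (hball ζ hζ).2) hf0 hfg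
  have hfp : f p = 0 := not_not.1 (mt (analyticDvdAt_of_ne_zero hf hg) hfg)
  filter_upwards [eventually_nhdsWithin_iff.1 hne] with t ht
  rcases eq_or_ne t 0 with rfl | ht0
  · exact ⟨p, mem_of_mem_nhds hW, by simp [hfp]⟩
  · exact ht ht0

theorem fgbar_locally_surjective_general [FiniteDimensional ℂ E] (hf : AnalyticAt ℂ f p)
    (hg : AnalyticAt ℂ g p) (hfg : ¬AnalyticDvdAt f g p) (hgf : ¬AnalyticDvdAt g f p) :
    𝓝 0 ≤ map (fun z ↦ f z * conj (g z)) (𝓝 p) := by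
  have hf0 : ¬∀ᶠ z in 𝓝 p, f z = 0 := fun h ↦
    hgf ⟨0, analyticAt_const, by simpa [EventuallyEq] using h⟩
  obtain ⟨v, hv⟩ := exists_analyticOrderAt_add_smul_ne_top hf hf0
  rcases le_or_gt (analyticOrderAt (fun ξ : ℂ ↦ f (p + ξ • v)) 0)
    (analyticOrderAt (fun ξ : ℂ ↦ g (p + ξ • v)) 0) with hle | hlt
  · exact nhds_zero_le_map_mul_conj_of_analyticOrderAt_le hf hg hv hle hfg
  · have hswap := map_mono (m := conj)
      (nhds_zero_le_map_mul_conj_of_analyticOrderAt_le hg hf hlt.ne_top hlt.le hgf)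
    have hconj : map conj (𝓝 (0 : ℂ)) = 𝓝 0 :=
      (conjLIE.toHomeomorph.map_nhds_eq 0).trans (congrArg 𝓝 (map_zero conj))
    simpa [hconj, map_map, comp_def, mul_comm] using hswap

end LocallySurjective

/-- If `f, g : ℂⁿ → ℂ` are holomorphic germs at `0` vanishing at `0`,
neither constant, with no common factor, and `f·conj g` is not constant and has an
isolated critical value at `0`, then `f·conj g` is locally surjective at `0`. -/
theorem fgbar_locally_surjective {n : ℕ}
    (f g : EuclideanSpace ℂ (Fin n) → ℂ)
    (U : Set (EuclideanSpace ℂ (Fin n))) (hU : U ∈ nhds (0 : EuclideanSpace ℂ (Fin n)))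
    (hfa : DifferentiableOn ℂ f U) (hga : DifferentiableOn ℂ g U)
    (hf0 : f 0 = 0) (hg0 : g 0 = 0)
    (hfnc : ¬ ∀ᶠ z in nhds (0 : EuclideanSpace ℂ (Fin n)), f z = 0)
    (hgnc : ¬ ∀ᶠ z in nhds (0 : EuclideanSpace ℂ (Fin n)), g z = 0)
    -- no common factor in the ring of germs of holomorphic functions at 0 :
    (hnocommon : ∀ (d q r : EuclideanSpace ℂ (Fin n) → ℂ),
      AnalyticAt ℂ d 0 → AnalyticAt ℂ q 0 → AnalyticAt ℂ r 0 →
      (f =ᶠ[nhds 0] fun z => d z * q z) → (g =ᶠ[nhds 0] fun z => d z * r z) → d 0 ≠ 0)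
    (hhnc : ¬ ∀ᶠ z in nhds (0 : EuclideanSpace ℂ (Fin n)),
      f z * (starRingEnd ℂ) (g z) = 0)
    -- isolated critical value at 0 ∈ ℂ :
    (hiso : ∃ δ > (0:ℝ), ∀ t : ℂ, t ≠ 0 → ‖t‖ < δ → ∀ x ∈ U,
      f x * (starRingEnd ℂ) (g x) = t →
      Surjective (fderiv ℝ (fun z => f z * (starRingEnd ℂ) (g z)) x)) :
    ∀ W ∈ nhds (0 : EuclideanSpace ℂ (Fin n)),
      (fun z => f z * (starRingEnd ℂ) (g z)) '' W ∈ nhds (0 : ℂ) := by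
  have hf : AnalyticAt ℂ f 0 :=
    analyticAt_of_eventually_differentiableAt (hfa.eventually_differentiableAt hU)
  have hg : AnalyticAt ℂ g 0 :=
    analyticAt_of_eventually_differentiableAt (hga.eventually_differentiableAt hU)
  have hfg : ¬AnalyticDvdAt f g 0 := fun ⟨q, hq, hgq⟩ ↦
    hnocommon f 1 q hf analyticAt_const hq (by simp) hgq hf0
  have hgf : ¬AnalyticDvdAt g f 0 := fun ⟨q, hq, hfq⟩ ↦
    hnocommon g q 1 hg hq analyticAt_const hfq (by simp) hg0
  exact fun W hW ↦ fgbar_locally_surjective_general hf hg hfg hgf (image_mem_map hW)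
end

section
/- Let f, g : ℂ² → ℂ be holomorphic map-germs at 0 with f(0) = g(0) = 0, neither constant and with no common irreducible factor. Then the map-germ (f, g) : ℂ² → ℂ² is locally surjective at 0: the image of every neighbourhood of 0 in ℂ² contains a neighbourhood of (0,0) in ℂ². -/
open Filter Function

/-!
Choose coordinates `(z, w)` in which neither `f` nor `g` vanishes identically on the axis `z = 0`,
and a small disc of radius `r` in which `w = 0` is the only zero of `f (0, ·)`. For small
`(z, a, b)`, the product of `g (z, w) - b` over the zeros `w` of `f (z, ·) - a` in that disc is a
resultant `R (z, a, b)`. By the argument principle the power sums of these values are contour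
integrals depending holomorphically on `(z, a, b)`, and so is their product, by Newton's identities.
Since `R (z, a, b) = 0` exactly when `(f, g)` takes the value `(a, b)` over `z`, Hurwitz's theorem
shows that all small `(a, b)` are attained near the origin as soon as `0` is an isolated zero of
`R (z, 0, 0)`, that is, as soon as `0` is an isolated common zero of `f` and `g`.

Isolation is where the absence of a common factor enters. By Weierstrass preparation `f` and `g` may
be replaced by monic polynomials in `w` over the valuation ring of germs in `z`. If their resultant
vanished, Gauss's lemma would turn a common factor over the fraction field into a monic common
factor, which is not a unit since it divides a polynomial reducing to a power of `w` at `z = 0`. So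
the resultant is a nonzero germ in `z` lying in the ideal generated by `f` and `g`, which forces
`z = 0` at every common zero close to the origin.
-/

namespace HolomorphicPair

open Metric Topology Complex Polynomial

section AnalyticFamily

variable {E F X : Type*} [NormedAddCommGroup E] [NormedSpace ℂ E] [NormedAddCommGroup F]
  [NormedSpace ℂ F] [TopologicalSpace X] [CompactSpace X]

/-- Analytic dependence of functions `φ e : X → ℂ` on a parameter `e` near `e₀`, uniformly over the
compact space `X`: for `e` near `e₀`, the map `e ↦ φ e` takes values in the Banach algebra `C(X, ℂ)`
and is analytic at `e₀`. -/
def AnalyticFamilyAt (φ : E → X → ℂ) (e₀ : E) : Prop :=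
  ∃ Φ : E → C(X, ℂ), AnalyticAt ℂ Φ e₀ ∧ ∀ᶠ e in 𝓝 e₀, ⇑(Φ e) = φ e

namespace AnalyticFamilyAt

variable {φ ψ : E → X → ℂ} {e₀ : E}

lemma congr (hφ : AnalyticFamilyAt φ e₀) (h : φ =ᶠ[𝓝 e₀] ψ) : AnalyticFamilyAt ψ e₀ := by
  obtain ⟨Φ, hΦ, hΦφ⟩ := hφ
  exact ⟨Φ, hΦ, EventuallyEq.trans hΦφ h⟩

lemma const (a : C(X, ℂ)) : AnalyticFamilyAt (fun _ : E ↦ ⇑a) e₀ :=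
  ⟨fun _ ↦ a, analyticAt_const, .of_forall fun _ ↦ rfl⟩

lemma of_scalar {a : E → ℂ} (ha : AnalyticAt ℂ a e₀) :
    AnalyticFamilyAt (fun e (_ : X) ↦ a e) e₀ :=
  ⟨fun e ↦ a e • 1, ha.smul analyticAt_const, .of_forall fun e ↦ by ext; simp⟩

lemma sub (hφ : AnalyticFamilyAt φ e₀) (hψ : AnalyticFamilyAt ψ e₀) :
    AnalyticFamilyAt (fun e x ↦ φ e x - ψ e x) e₀ := by
  obtain ⟨Φ, hΦ, hΦφ⟩ := hφ
  obtain ⟨Ψ, hΨ, hΨψ⟩ := hψ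
  refine ⟨fun e ↦ Φ e - Ψ e, hΦ.sub hΨ, ?_⟩
  filter_upwards [hΦφ, hΨψ] with e h₁ h₂
  ext x
  simp [h₁, h₂]

lemma mul (hφ : AnalyticFamilyAt φ e₀) (hψ : AnalyticFamilyAt ψ e₀) :
    AnalyticFamilyAt (fun e x ↦ φ e x * ψ e x) e₀ := by
  obtain ⟨Φ, hΦ, hΦφ⟩ := hφ
  obtain ⟨Ψ, hΨ, hΨψ⟩ := hψ
  refine ⟨fun e ↦ Φ e * Ψ e, hΦ.mul hΨ, ?_⟩
  filter_upwards [hΦφ, hΨψ] with e h₁ h₂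
  ext x
  simp [h₁, h₂]

lemma pow (hφ : AnalyticFamilyAt φ e₀) (k : ℕ) : AnalyticFamilyAt (fun e x ↦ φ e x ^ k) e₀ := by
  obtain ⟨Φ, hΦ, hΦφ⟩ := hφ
  refine ⟨fun e ↦ Φ e ^ k, hΦ.pow k, ?_⟩
  filter_upwards [hΦφ] with e h
  ext x
  simp [h]

lemma inv (hφ : AnalyticFamilyAt φ e₀) (h₀ : ∀ x, φ e₀ x ≠ 0) :
    AnalyticFamilyAt (fun e x ↦ (φ e x)⁻¹) e₀ := by
  obtain ⟨Φ, hΦ, hΦφ⟩ := hφ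
  have hunit : IsUnit (Φ e₀) := by
    rw [ContinuousMap.isUnit_iff_forall_ne_zero, hΦφ.self_of_nhds]
    exact h₀
  refine ⟨fun e ↦ Ring.inverse (Φ e),
    AnalyticAt.comp (f := Φ) (analyticAt_inverse hunit.unit) hΦ, ?_⟩
  filter_upwards [hΦφ, hΦ.continuousAt.eventually (Units.isOpen.mem_nhds hunit)] with e h h'
  ext x
  have hmul : Φ e x * Ring.inverse (Φ e) x = 1 :=
    congr($(Ring.mul_inverse_cancel (Φ e) h') x)
  rw [← h]
  exact eq_inv_of_mul_eq_one_right hmul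

lemma comp {φ : F → X → ℂ} {u : E → F} (hφ : AnalyticFamilyAt φ (u e₀))
    (hu : AnalyticAt ℂ u e₀) : AnalyticFamilyAt (fun e ↦ φ (u e)) e₀ := by
  obtain ⟨Φ, hΦ, hΦφ⟩ := hφ
  exact ⟨fun e ↦ Φ (u e), hΦ.comp hu, hu.continuousAt.eventually hΦφ⟩

lemma eventually_ne_zero (hφ : AnalyticFamilyAt φ e₀) (h₀ : ∀ x, φ e₀ x ≠ 0) :
    ∀ᶠ e in 𝓝 e₀, ∀ x, φ e x ≠ 0 := by
  obtain ⟨Φ, hΦ, hΦφ⟩ := hφ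
  have hunit : IsUnit (Φ e₀) := by
    rw [ContinuousMap.isUnit_iff_forall_ne_zero, hΦφ.self_of_nhds]
    exact h₀
  filter_upwards [hΦφ, hΦ.continuousAt.eventually (Units.isOpen.mem_nhds hunit)] with e h h'
  rw [← h]
  exact ContinuousMap.isUnit_iff_forall_ne_zero _ |>.1 h'

lemma of_differentiableOn {φ : ℂ → X → ℂ} {z₀ : ℂ} {s : Set ℂ} (hs : s ∈ 𝓝 z₀)
    (hc : ContinuousOn (uncurry φ) (s ×ˢ Set.univ))
    (hd : ∀ x, DifferentiableOn ℂ (fun z ↦ φ z x) s) : AnalyticFamilyAt φ z₀ := by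
  obtain ⟨δ, hδ, hδs⟩ := nhds_basis_closedBall.mem_iff.1 hs
  have hφ : ∀ z ∈ s, Continuous (φ z) := fun z hz ↦
    hc.comp_continuous (f := fun x ↦ (z, x)) (by fun_prop) fun x ↦ ⟨hz, trivial⟩
  classical
  let Φ : ℂ → C(X, ℂ) := fun z ↦ if hz : z ∈ s then ⟨φ z, hφ z hz⟩ else 0
  have hΦφ : ∀ z ∈ s, ⇑(Φ z) = φ z := fun z hz ↦ by simp [Φ, hz]
  have hΦc : ContinuousOn Φ s := by
    rw [continuousOn_iff_continuous_domRestrict]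
    refine ContinuousMap.continuous_of_continuous_uncurry _ ?_
    refine (hc.comp_continuous (f := fun p : s × X ↦ ((p.1 : ℂ), p.2)) (by fun_prop)
      fun p ↦ ⟨p.1.2, trivial⟩).congr fun p ↦ ?_
    simp [hΦφ, uncurry]
  refine ⟨Φ, ?_, eventually_of_mem hs hΦφ⟩
  have hsphere : sphere z₀ δ ⊆ s := sphere_subset_closedBall.trans hδs
  lift δ to NNReal using hδ.le
  refine (hasFPowerSeriesOn_cauchy_integral
    ((hΦc.mono hsphere).circleIntegrable hδ.le) (mod_cast hδ)).analyticAt.congr ?_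
  filter_upwards [ball_mem_nhds z₀ hδ] with z hz
  ext x
  have hint : CircleIntegrable (fun w ↦ (w - z)⁻¹ • Φ w) z₀ δ := by
    refine (ContinuousOn.fun_smul (.inv₀ (by fun_prop) fun w hw h₀ ↦ ?_)
      (hΦc.mono hsphere)).circleIntegrable hδ.le
    exact (sub_eq_zero.1 h₀ ▸ hz : w ∈ ball z₀ δ).ne hw
  have heval : (∮ w in C(z₀, δ), (w - z)⁻¹ • Φ w) x = ∮ w in C(z₀, δ), (w - z)⁻¹ • φ w x := by
    refine ((ContinuousMap.evalCLM ℂ x).intervalIntegral_comp_comm hint.out).symm.trans ?_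
    refine intervalIntegral.integral_congr fun θ _ ↦ ?_
    simp [hΦφ _ (hsphere (circleMap_mem_sphere z₀ hδ.le θ))]
  have hcauchy := ((hd x).mono hδs).circleIntegral_sub_inv_smul hz
  rw [ContinuousMap.smul_apply, heval, hcauchy, hΦφ z (hδs (ball_subset_closedBall hz)),
    inv_smul_smul₀ two_pi_I_ne_zero]

lemma of_analyticAt {K : Set F} [CompactSpace K] {f : ℂ × F → ℂ} {z₀ : ℂ}
    (hf : ∀ x ∈ K, AnalyticAt ℂ f (z₀, x)) :
    AnalyticFamilyAt (fun z (x : K) ↦ f (z, x)) z₀ := by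
  have hev : ∀ᶠ z in 𝓝 z₀, ∀ x ∈ K, AnalyticAt ℂ f (z, x) :=
    (isCompact_iff_compactSpace.2 ‹_›).eventually_forall_of_forall_eventually
      fun x hx ↦ (hf x hx).eventually_analyticAt
  refine of_differentiableOn hev (fun p hp ↦ ?_) fun x z hz ↦ ?_
  · exact ((hp.1 p.2 p.2.2).continuousAt.comp (f := fun p : ℂ × K ↦ (p.1, (p.2 : F)))
      (by fun_prop)).continuousWithinAt
  · exact (hz x x.2).along_fst.differentiableAt.differentiableWithinAt

lemma deriv_of_analyticAt {K : Set ℂ} [CompactSpace K] {f : ℂ × ℂ → ℂ} {z₀ : ℂ}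
    (hf : ∀ w ∈ K, AnalyticAt ℂ f (z₀, w)) :
    AnalyticFamilyAt (fun z (w : K) ↦ deriv (fun w ↦ f (z, w)) w) z₀ := by
  have hfderiv : AnalyticFamilyAt (fun z (w : K) ↦ fderiv ℂ f (z, (w : ℂ)) (0, 1)) z₀ :=
    .of_analyticAt (f := fun p ↦ fderiv ℂ f p (0, 1)) fun w hw ↦
      ((ContinuousLinearMap.apply ℂ ℂ ((0, 1) : ℂ × ℂ)).analyticAt _).comp (hf w hw).fderiv
  have hev : ∀ᶠ z in 𝓝 z₀, ∀ w ∈ K, AnalyticAt ℂ f (z, w) :=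
    (isCompact_iff_compactSpace.2 ‹_›).eventually_forall_of_forall_eventually
      fun w hw ↦ (hf w hw).eventually_analyticAt
  refine hfderiv.congr (hev.mono fun z hz ↦ funext fun w ↦ ?_)
  have hline : HasDerivAt (fun w : ℂ ↦ (z, w)) (0, 1) w :=
    (hasDerivAt_const _ _).prodMk (hasDerivAt_id _)
  exact ((hz w w.2).differentiableAt.hasFDerivAt.comp_hasDerivAt (w : ℂ) hline).deriv.symm

end AnalyticFamilyAt

end AnalyticFamily

section CircleIntegral

/-- The contour integral over the circle with centre `c` and radius `r`, as a continuous linear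
functional on the continuous functions on that circle. -/
noncomputable def circleIntegralCLM (c : ℂ) {r : ℝ} (hr : 0 ≤ r) : C(sphere c r, ℂ) →L[ℂ] ℂ :=
  have hparam : Continuous fun θ ↦ (⟨circleMap c r θ, circleMap_mem_sphere c hr θ⟩ : sphere c r) :=
    (continuous_circleMap c r).subtype_mk _
  have hint (Φ : C(sphere c r, ℂ)) : IntervalIntegrable (fun θ ↦ deriv (circleMap c r) θ •
      Φ ⟨circleMap c r θ, circleMap_mem_sphere c hr θ⟩) MeasureTheory.volume 0 (2 * Real.pi) :=
    (((contDiff_circleMap c r (n := 1)).continuous_deriv le_rfl).smul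
      (Φ.continuous.comp hparam)).intervalIntegrable _ _
  LinearMap.mkContinuous
    { toFun := fun Φ ↦ ∫ θ in (0 : ℝ)..2 * Real.pi,
        deriv (circleMap c r) θ • Φ ⟨circleMap c r θ, circleMap_mem_sphere c hr θ⟩
      map_add' := fun Φ Ψ ↦ by
        simp only [ContinuousMap.add_apply, smul_add]
        exact intervalIntegral.integral_add (hint Φ) (hint Ψ)
      map_smul' := fun a Φ ↦ by
        simp only [ContinuousMap.smul_apply, RingHom.id_apply, smul_comm _ a]
        exact intervalIntegral.integral_smul _ _ }
    (r * |2 * Real.pi - 0|) fun Φ ↦ by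
      rw [mul_right_comm]
      refine intervalIntegral.norm_integral_le_of_norm_le_const fun θ _ ↦ ?_
      rw [norm_smul]
      gcongr
      · simp [abs_of_nonneg hr]
      · exact Φ.norm_coe_le_norm _

lemma circleIntegralCLM_apply {c : ℂ} {r : ℝ} (hr : 0 ≤ r) {Φ : C(sphere c r, ℂ)} {φ : ℂ → ℂ}
    (h : ∀ ζ, Φ ζ = φ ζ) : circleIntegralCLM c hr Φ = ∮ ζ in C(c, r), φ ζ := by
  simp [circleIntegralCLM, circleIntegral, h]

variable {E : Type*} [NormedAddCommGroup E] [NormedSpace ℂ E]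

lemma AnalyticFamilyAt.circleIntegral {c : ℂ} {r : ℝ} (hr : 0 ≤ r) {φ : E → ℂ → ℂ} {e₀ : E}
    (hφ : AnalyticFamilyAt (fun e (ζ : sphere c r) ↦ φ e ζ) e₀) :
    AnalyticAt ℂ (fun e ↦ ∮ ζ in C(c, r), φ e ζ) e₀ := by
  obtain ⟨Φ, hΦ, hΦφ⟩ := hφ
  refine (((circleIntegralCLM c hr).analyticAt _).comp hΦ).congr ?_
  filter_upwards [hΦφ] with e h
  exact circleIntegralCLM_apply hr fun ζ ↦ congr_fun h ζ

end CircleIntegral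

section HolomorphicFamily

variable {E F : Type*} [NormedAddCommGroup E] [NormedSpace ℂ E] [NormedAddCommGroup F]
  [NormedSpace ℂ F]

/-- A family of functions of one complex variable, each holomorphic on the closed disc with centre
`c` and radius `r`, whose restrictions to the boundary circle depend analytically on the parameter
near `e₀`. By Cauchy's formula this is what is needed to control the interior values. -/
structure HolomorphicFamilyAt (c : ℂ) (r : ℝ) (φ : E → ℂ → ℂ) (e₀ : E) : Prop where
  analyticOnNhd : ∀ᶠ e in 𝓝 e₀, AnalyticOnNhd ℂ (φ e) (closedBall c r)
  boundary : AnalyticFamilyAt (fun e (ζ : sphere c r) ↦ φ e ζ) e₀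

namespace HolomorphicFamilyAt

variable {c : ℂ} {r : ℝ} {φ : E → ℂ → ℂ} {e₀ : E}

lemma of_analyticAt {f : ℂ × ℂ → ℂ} {z₀ : ℂ} (hf : ∀ w ∈ closedBall c r, AnalyticAt ℂ f (z₀, w)) :
    HolomorphicFamilyAt c r (fun z w ↦ f (z, w)) z₀ where
  analyticOnNhd := by
    have hev : ∀ᶠ z in 𝓝 z₀, ∀ w ∈ closedBall c r, AnalyticAt ℂ f (z, w) :=
      (isCompact_closedBall c r).eventually_forall_of_forall_eventually
        fun w hw ↦ (hf w hw).eventually_analyticAt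
    exact hev.mono fun z hz w hw ↦ (hz w hw).along_snd
  boundary := .of_analyticAt fun w hw ↦ hf w (sphere_subset_closedBall hw)

lemma sub_scalar (hφ : HolomorphicFamilyAt c r φ e₀) {a : E → ℂ} (ha : AnalyticAt ℂ a e₀) :
    HolomorphicFamilyAt c r (fun e w ↦ φ e w - a e) e₀ where
  analyticOnNhd := hφ.analyticOnNhd.mono fun _ h w hw ↦ (h w hw).sub analyticAt_const
  boundary := hφ.boundary.sub (.of_scalar ha)

lemma pow (hφ : HolomorphicFamilyAt c r φ e₀) (k : ℕ) :
    HolomorphicFamilyAt c r (fun e w ↦ φ e w ^ k) e₀ where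
  analyticOnNhd := hφ.analyticOnNhd.mono fun _ h w hw ↦ (h w hw).pow k
  boundary := hφ.boundary.pow k

lemma comp {φ : F → ℂ → ℂ} {u : E → F} (hφ : HolomorphicFamilyAt c r φ (u e₀))
    (hu : AnalyticAt ℂ u e₀) : HolomorphicFamilyAt c r (fun e ↦ φ (u e)) e₀ where
  analyticOnNhd := hu.continuousAt.eventually hφ.analyticOnNhd
  boundary := hφ.boundary.comp hu

/-- The Cauchy kernel is itself an analytic family, with the interior point as parameter. -/
lemma analyticAt_uncurry (hφ : HolomorphicFamilyAt c r φ e₀) {w₀ : ℂ} (hw₀ : w₀ ∈ ball c r) :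
    AnalyticAt ℂ (uncurry φ) (e₀, w₀) := by
  have hr : 0 ≤ r := (pos_of_mem_ball hw₀).le
  have hkernel : AnalyticFamilyAt
      (fun (p : E × ℂ) (ζ : sphere c r) ↦ ((ζ : ℂ) - p.2)⁻¹) (e₀, w₀) :=
    AnalyticFamilyAt.inv
      (.sub (.const ⟨Subtype.val, continuous_subtype_val⟩) (.of_scalar analyticAt_snd))
      fun ζ h₀ ↦ (sub_eq_zero.1 h₀ ▸ hw₀ : (ζ : ℂ) ∈ ball c r).ne ζ.2
  have hboundary : AnalyticFamilyAt (fun (p : E × ℂ) (ζ : sphere c r) ↦ φ p.1 ζ) (e₀, w₀) :=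
    AnalyticFamilyAt.comp (φ := fun e (ζ : sphere c r) ↦ φ e ζ) hφ.boundary analyticAt_fst
  have hint : AnalyticAt ℂ (fun p : E × ℂ ↦ ∮ ζ in C(c, r), (ζ - p.2)⁻¹ * φ p.1 ζ) (e₀, w₀) :=
    (hkernel.mul hboundary).circleIntegral hr
  refine (hint.fun_const_smul (c := (2 * Real.pi * I : ℂ)⁻¹)).congr ?_
  filter_upwards [prod_mem_nhds hφ.analyticOnNhd (isOpen_ball.mem_nhds hw₀)] with p ⟨hφp, hp⟩
  have hcauchy := (AnalyticOnNhd.differentiableOn hφp |>.diffContOnCl_ball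
    le_rfl).two_pi_i_inv_smul_circleIntegral_sub_inv_smul hp
  simpa only [smul_eq_mul, uncurry] using hcauchy

end HolomorphicFamilyAt

lemma analyticAt_of_differentiableOn_prod {f : ℂ × ℂ → ℂ} {s : Set (ℂ × ℂ)} {p : ℂ × ℂ}
    (hs : s ∈ 𝓝 p) (hf : DifferentiableOn ℂ f s) : AnalyticAt ℂ f p := by
  obtain ⟨ε, hε, hεs⟩ := nhds_basis_ball.mem_iff.1 hs
  rw [← ball_prod_same] at hεs
  have hr : closedBall p.2 (ε / 2) ⊆ ball p.2 ε := closedBall_subset_ball (half_lt_self hε)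
  have hfam : HolomorphicFamilyAt p.2 (ε / 2) (fun z w ↦ f (z, w)) p.1 := by
    constructor
    · filter_upwards [ball_mem_nhds p.1 hε] with z hz
      refine (DifferentiableOn.analyticOnNhd ?_ isOpen_ball).mono hr
      exact hf.comp (by fun_prop) fun w hw ↦ hεs ⟨hz, hw⟩
    · refine .of_differentiableOn (ball_mem_nhds p.1 hε) ?_ fun w ↦ ?_
      · exact hf.continuousOn.comp (f := fun q : ℂ × sphere p.2 (ε / 2) ↦ (q.1, (q.2 : ℂ)))
          (by fun_prop) fun q hq ↦ hεs ⟨hq.1, hr (sphere_subset_closedBall q.2.2)⟩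
      · exact hf.comp (f := fun z ↦ (z, (w : ℂ))) (by fun_prop)
          fun z hz ↦ hεs ⟨hz, hr (sphere_subset_closedBall w.2)⟩
  exact hfam.analyticAt_uncurry (mem_ball_self (half_pos hε))

theorem analyticAt_of_differentiableOn_of_finrank_eq_two (hE : Module.finrank ℂ E = 2) {f : E → ℂ}
    {s : Set E} {x : E} (hs : s ∈ 𝓝 x) (hf : DifferentiableOn ℂ f s) : AnalyticAt ℂ f x := by
  have : FiniteDimensional ℂ E := .of_finrank_pos (by simp [hE])
  let L : E ≃L[ℂ] ℂ × ℂ := .ofFinrankEq (by simp [hE])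
  have hcomp : AnalyticAt ℂ (f ∘ L.symm) (L x) := by
    refine analyticAt_of_differentiableOn_prod (s := L.symm ⁻¹' s) ?_
      (hf.comp L.symm.differentiableOn fun _ ↦ id)
    exact L.symm.continuous.continuousAt.preimage_mem_nhds (by simpa using hs)
  simpa [Function.comp_def] using hcomp.comp (L.analyticAt x)

end HolomorphicFamily

section Zeros

/-- The zeros of `h` in a compact set `K`, each repeated according to its multiplicity. -/
noncomputable def zerosIn (h : ℂ → ℂ) (K : Set ℂ) : Multiset ℂ :=
  ∑ᶠ p, (MeromorphicOn.divisor h K p).toNat • {p}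

variable {h : ℂ → ℂ} {K : Set ℂ}

lemma zerosIn_eq_sum (hK : IsCompact K) :
    zerosIn h K = ∑ p ∈ ((MeromorphicOn.divisor h K).finiteSupport hK).toFinset,
      (MeromorphicOn.divisor h K p).toNat • {p} :=
  finsum_eq_sum_of_support_subset _ fun p hp ↦ by
    simp only [Set.Finite.coe_toFinset, Function.mem_support]
    exact fun h₀ ↦ hp (by simp [h₀])

lemma finprod_sub_zpow_divisor (hK : IsCompact K) (hh : AnalyticOnNhd ℂ h K) (w : ℂ) :
    (∏ᶠ p, (fun w ↦ w - p) ^ MeromorphicOn.divisor h K p) w =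
      ((zerosIn h K).map (X - C ·)).prod.eval w := by
  have hnonneg : 0 ≤ MeromorphicOn.divisor h K := MeromorphicOn.AnalyticOnNhd.divisor_nonneg hh
  rw [finprod_eq_prod_of_mulSupport_subset
    (s := ((MeromorphicOn.divisor h K).finiteSupport hK).toFinset), Finset.prod_apply,
    zerosIn_eq_sum hK, ← Multiset.coe_mapAddMonoidHom, map_sum, Multiset.prod_sum, eval_prod]
  · refine Finset.prod_congr rfl fun p _ ↦ ?_
    rw [map_nsmul, Multiset.prod_nsmul, Multiset.coe_mapAddMonoidHom, Multiset.map_singleton,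
      Multiset.prod_singleton, eval_pow, eval_sub, eval_X, eval_C, Pi.pow_apply, ← zpow_natCast,
      Int.toNat_of_nonneg (hnonneg p)]
  · intro p hp
    simp only [Set.Finite.coe_toFinset, Function.mem_support]
    exact fun h₀ ↦ hp (by simp [h₀])

lemma mem_of_mem_zerosIn (hK : IsCompact K) {y : ℂ} (hy : y ∈ zerosIn h K) : y ∈ K := by
  rw [zerosIn_eq_sum hK, Multiset.mem_sum] at hy
  obtain ⟨p, hp, hyp⟩ := hy
  rw [Multiset.mem_singleton.1 (Multiset.mem_of_mem_nsmul hyp)]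
  exact (MeromorphicOn.divisor h K).supportWithinDomain (by simpa using hp)

lemma exists_eventuallyEq_prod_zerosIn_mul (hK : IsCompact K) (hpre : IsPreconnected K)
    (hnt : K.Nontrivial) (hh : AnalyticOnNhd ℂ h K) (hne : ∃ z ∈ K, h z ≠ 0) :
    ∃ u : ℂ → ℂ, AnalyticOnNhd ℂ u K ∧ (∀ w ∈ K, u w ≠ 0) ∧
      ∀ w ∈ K, h =ᶠ[𝓝 w] fun w ↦ ((zerosIn h K).map (X - C ·)).prod.eval w * u w := by
  have horder : ∀ w : K, meromorphicOrderAt h w ≠ ⊤ := by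
    rintro w hw
    obtain ⟨z, hz, hhz⟩ := hne
    rw [meromorphicOrderAt_eq_top_iff] at hw
    exact hhz (hh.eqOn_zero_of_preconnected_of_frequently_eq_zero hpre w.2 hw.frequently hz)
  obtain ⟨u, hu, hu₀, hEq⟩ := hh.meromorphicOn.extract_zeros_poles horder
    ((MeromorphicOn.divisor h K).finiteSupport hK)
  refine ⟨u, hu, fun w hw ↦ hu₀ ⟨w, hw⟩, fun w hw ↦ ?_⟩
  have hprod : AnalyticAt ℂ (fun w ↦ ((zerosIn h K).map (X - C ·)).prod.eval w * u w) w :=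
    .mul (AnalyticOnNhd.eval_polynomial _ w trivial) (hu w hw)
  refine ((hh w hw).frequently_eq_iff_eventually_eq hprod).1 ?_
  have hpunctured := mem_codiscreteWithin.1 hEq w hw
  rw [Filter.disjoint_principal_right] at hpunctured
  refine ((accPt_iff_frequently_nhdsNE.1
    (hpre.preperfect_of_nontrivial hnt w hw)).and_eventually hpunctured).mono ?_
  rintro z ⟨hz, hz'⟩
  have hzeq := by simpa [hz] using hz'
  rw [hzeq, finprod_sub_zpow_divisor hK hh]

lemma mem_zerosIn (hK : IsCompact K) (hpre : IsPreconnected K) (hnt : K.Nontrivial)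
    (hh : AnalyticOnNhd ℂ h K) (hne : ∃ z ∈ K, h z ≠ 0) {y : ℂ} :
    y ∈ zerosIn h K ↔ y ∈ K ∧ h y = 0 := by
  obtain ⟨u, -, hu₀, hEq⟩ := exists_eventuallyEq_prod_zerosIn_mul hK hpre hnt hh hne
  have hzero : y ∈ K → (h y = 0 ↔ y ∈ zerosIn h K) := fun hy ↦ by
    simp [(hEq y hy).self_of_nhds, hu₀ y hy, eval_multiset_prod, Multiset.prod_eq_zero_iff,
      sub_eq_zero]
  exact ⟨fun hy ↦ ⟨mem_of_mem_zerosIn hK hy, (hzero (mem_of_mem_zerosIn hK hy)).2 hy⟩,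
    fun hy ↦ (hzero hy.1).1 hy.2⟩

end Zeros

section ArgumentPrinciple

variable {c : ℂ} {r : ℝ}

lemma nontrivial_closedBall (hr : 0 < r) : (closedBall c r).Nontrivial := by
  obtain ⟨z, hz⟩ : (sphere c r).Nonempty := NormedSpace.sphere_nonempty.2 hr.le
  exact ⟨c, mem_closedBall_self hr.le, z, sphere_subset_closedBall hz,
    (ne_of_mem_sphere hz hr.ne').symm⟩

lemma circleIntegral_mul_logDeriv_of_ne_zero {φ u : ℂ → ℂ} (hr : 0 ≤ r)
    (hφ : AnalyticOnNhd ℂ φ (closedBall c r)) (hu : AnalyticOnNhd ℂ u (closedBall c r))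
    (hu₀ : ∀ z ∈ closedBall c r, u z ≠ 0) : ∮ z in C(c, r), φ z * logDeriv u z = 0 :=
  (hφ.mul (hu.deriv.div hu hu₀)).differentiableOn.diffContOnCl_ball le_rfl
    |>.circleIntegral_eq_zero hr

lemma circleIntegral_mul_logDeriv_sub_mul {φ h : ℂ → ℂ} {a : ℂ} (ha : a ∈ ball c r)
    (hφ : AnalyticOnNhd ℂ φ (closedBall c r)) (hh : AnalyticOnNhd ℂ h (closedBall c r))
    (hh₀ : ∀ z ∈ sphere c r, h z ≠ 0) :
    ∮ z in C(c, r), φ z * logDeriv (fun w ↦ (w - a) * h w) z =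
      2 * Real.pi * I * φ a + ∮ z in C(c, r), φ z * logDeriv h z := by
  have hr : 0 ≤ r := (pos_of_mem_ball ha).le
  have hφc : ContinuousOn φ (sphere c r) := hφ.continuousOn.mono sphere_subset_closedBall
  have hsub : ∀ z ∈ sphere c r, z - a ≠ 0 := fun z hz h₀ ↦
    (sub_eq_zero.1 h₀ ▸ ha : z ∈ ball c r).ne hz
  have hsplit : ∀ z ∈ sphere c r, φ z * logDeriv (fun w ↦ (w - a) * h w) z =
      (z - a)⁻¹ • φ z + φ z * logDeriv h z := fun z hz ↦ by
    rw [logDeriv_mul z (hsub z hz) (hh₀ z hz) (by fun_prop)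
      (hh z (sphere_subset_closedBall hz)).differentiableAt]
    have hderiv : deriv (fun w ↦ w - a) z = 1 := by simp
    rw [logDeriv_apply, hderiv, smul_eq_mul]
    ring
  have hpole : CircleIntegrable (fun z ↦ (z - a)⁻¹ • φ z) c r :=
    ((ContinuousOn.inv₀ (by fun_prop) hsub).fun_smul hφc).circleIntegrable hr
  have hrest : CircleIntegrable (fun z ↦ φ z * logDeriv h z) c r :=
    (hφc.mul ((hh.deriv.continuousOn.mono sphere_subset_closedBall).div
      (hh.continuousOn.mono sphere_subset_closedBall) hh₀)).circleIntegrable hr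
  rw [circleIntegral.integral_congr hr hsplit, circleIntegral.integral_add hpole hrest,
    hφ.differentiableOn.circleIntegral_sub_inv_smul ha, smul_eq_mul]

lemma circleIntegral_mul_logDeriv_prod_mul {φ u : ℂ → ℂ} {s : Multiset ℂ} (hr : 0 ≤ r)
    (hs : ∀ a ∈ s, a ∈ ball c r) (hφ : AnalyticOnNhd ℂ φ (closedBall c r))
    (hu : AnalyticOnNhd ℂ u (closedBall c r)) (hu₀ : ∀ z ∈ closedBall c r, u z ≠ 0) :
    ∮ z in C(c, r), φ z * logDeriv (fun w ↦ (s.map (X - C ·)).prod.eval w * u w) z =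
      2 * Real.pi * I * (s.map φ).sum := by
  induction s using Multiset.induction with
  | empty => simpa using circleIntegral_mul_logDeriv_of_ne_zero hr hφ hu hu₀
  | cons a s ih =>
    rw [Multiset.forall_mem_cons] at hs
    have hne : ∀ z ∈ sphere c r, (s.map (X - C ·)).prod.eval z * u z ≠ 0 := fun z hz ↦ by
      refine mul_ne_zero ?_ (hu₀ z (sphere_subset_closedBall hz))
      simp only [eval_multiset_prod, Multiset.map_map, Function.comp_def, eval_sub, eval_X,
        eval_C, ne_eq, Multiset.prod_eq_zero_iff, Multiset.mem_map, sub_eq_zero]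
      rintro ⟨b, hb, rfl⟩
      exact (hs.2 _ hb).ne hz
    have hrest := circleIntegral_mul_logDeriv_sub_mul hs.1 hφ
      ((AnalyticOnNhd.eval_polynomial _ |>.mono (Set.subset_univ _)).mul hu) hne
    simp only [Multiset.map_cons, Multiset.prod_cons, Multiset.sum_cons, eval_mul, eval_sub,
      eval_X, eval_C, mul_assoc] at hrest ih ⊢
    rw [hrest, ih hs.2]
    ring

variable {E : Type*} [NormedAddCommGroup E] [NormedSpace ℂ E]

theorem sum_zerosIn_closedBall {φ h : ℂ → ℂ} (hr : 0 < r) (hφ : AnalyticOnNhd ℂ φ (closedBall c r))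
    (hh : AnalyticOnNhd ℂ h (closedBall c r)) (hh₀ : ∀ z ∈ sphere c r, h z ≠ 0) :
    ((zerosIn h (closedBall c r)).map φ).sum =
      (2 * Real.pi * I)⁻¹ * ∮ z in C(c, r), φ z * logDeriv h z := by
  have hK := isCompact_closedBall c r
  have hpre := (convex_closedBall c r).isPreconnected
  obtain ⟨z₀, hz₀⟩ : (sphere c r).Nonempty := NormedSpace.sphere_nonempty.2 hr.le
  have hne : ∃ z ∈ closedBall c r, h z ≠ 0 := ⟨z₀, sphere_subset_closedBall hz₀, hh₀ z₀ hz₀⟩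
  obtain ⟨u, hu, hu₀, hEq⟩ :=
    exists_eventuallyEq_prod_zerosIn_mul hK hpre (nontrivial_closedBall hr) hh hne
  have hball : ∀ a ∈ zerosIn h (closedBall c r), a ∈ ball c r := fun a ha ↦ by
    obtain ⟨ha, ha₀⟩ := (mem_zerosIn hK hpre (nontrivial_closedBall hr) hh hne).1 ha
    exact (ball_union_sphere (x := c) (ε := r) ▸ ha).resolve_right fun h ↦ hh₀ a h ha₀
  have hcongr : ∮ z in C(c, r), φ z * logDeriv h z = ∮ z in C(c, r), φ z * logDeriv
      (fun w ↦ ((zerosIn h (closedBall c r)).map (X - C ·)).prod.eval w * u w) z :=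
    circleIntegral.integral_congr hr.le fun z hz ↦ by
      have hz := hEq z (sphere_subset_closedBall hz)
      simp only [logDeriv_apply, hz.deriv_eq, hz.self_of_nhds]
  rw [hcongr, circleIntegral_mul_logDeriv_prod_mul hr.le hball hφ hu hu₀,
    inv_mul_cancel_left₀ two_pi_I_ne_zero]

theorem HolomorphicFamilyAt.analyticAt_sum_zerosIn {φ h : E → ℂ → ℂ} {e₀ : E} (hr : 0 < r)
    (hφ : HolomorphicFamilyAt c r φ e₀) (hh : HolomorphicFamilyAt c r h e₀)
    (hh' : AnalyticFamilyAt (fun e (ζ : sphere c r) ↦ deriv (h e) ζ) e₀)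
    (hh₀ : ∀ ζ ∈ sphere c r, h e₀ ζ ≠ 0) :
    AnalyticAt ℂ (fun e ↦ ((zerosIn (h e) (closedBall c r)).map (φ e)).sum) e₀ := by
  have hne : ∀ ζ : sphere c r, h e₀ ζ ≠ 0 := fun ζ ↦ hh₀ ζ ζ.2
  have hint : AnalyticAt ℂ
      (fun e ↦ ∮ ζ in C(c, r), φ e ζ * (deriv (h e) ζ * (h e ζ)⁻¹)) e₀ :=
    (hφ.boundary.mul (hh'.mul (hh.boundary.inv hne))).circleIntegral hr.le
  refine (analyticAt_const (v := (2 * Real.pi * I : ℂ)⁻¹) |>.fun_mul hint).congr ?_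
  filter_upwards [hφ.analyticOnNhd, hh.analyticOnNhd, hh.boundary.eventually_ne_zero hne]
    with e hφe hhe hne
  simpa only [logDeriv_apply, div_eq_mul_inv] using
    (sum_zerosIn_closedBall hr hφe hhe fun ζ hζ ↦ hne ⟨ζ, hζ⟩).symm

end ArgumentPrinciple

section PowerSums

lemma natCast_mul_esymm {R : Type*} [CommRing R] (s : Multiset R) (k : ℕ) :
    k * s.esymm k = (-1) ^ (k + 1) * ∑ a ∈ Finset.HasAntidiagonal.antidiagonal k with a.1 < k,
      (-1) ^ a.1 * s.esymm a.1 * (s.map (· ^ a.2)).sum := by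
  classical
  have hs : Finset.univ.val.map (fun i : s.ToType ↦ i.1) = s := Multiset.map_univ_coe s
  have hesymm (k : ℕ) : MvPolynomial.aeval (fun i : s.ToType ↦ i.1)
      (MvPolynomial.esymm s.ToType ℤ k) = s.esymm k := by
    rw [MvPolynomial.aeval_esymm_eq_multiset_esymm, hs]
  have hpsum (k : ℕ) : MvPolynomial.aeval (fun i : s.ToType ↦ i.1)
      (MvPolynomial.psum s.ToType ℤ k) = (s.map (· ^ k)).sum := by
    conv_rhs => rw [← hs, Multiset.map_map]
    simp only [MvPolynomial.psum, map_sum, map_pow, MvPolynomial.aeval_X]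
    rfl
  simpa [hesymm, hpsum] using congr(MvPolynomial.aeval (fun i : s.ToType ↦ i.1)
    $(MvPolynomial.mul_esymm_eq_sum s.ToType ℤ k))

variable {E : Type*} [NormedAddCommGroup E] [NormedSpace ℂ E] {s : E → Multiset ℂ} {e₀ : E}

lemma analyticAt_esymm (hs : ∀ k : ℕ, AnalyticAt ℂ (fun e ↦ ((s e).map (· ^ k)).sum) e₀) (k : ℕ) :
    AnalyticAt ℂ (fun e ↦ (s e).esymm k) e₀ := by
  induction k using Nat.strong_induction_on with
  | _ k ih =>
    obtain rfl | hk := Nat.eq_zero_or_pos k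
    · simpa [Multiset.esymm] using analyticAt_const
    have hk₀ : (k : ℂ) ≠ 0 := mod_cast hk.ne'
    have hsum : AnalyticAt ℂ (fun e ↦ k * (s e).esymm k) e₀ := by
      simp only [natCast_mul_esymm]
      refine analyticAt_const.mul (Finset.analyticAt_fun_sum _ fun a ha ↦ ?_)
      exact (analyticAt_const.mul (ih a.1 (Finset.mem_filter.1 ha).2)).mul (hs a.2)
    simpa only [inv_mul_cancel_left₀ hk₀] using (analyticAt_const (v := (k : ℂ)⁻¹)).fun_mul hsum

lemma eventually_card_eq (hs : ∀ k : ℕ, AnalyticAt ℂ (fun e ↦ ((s e).map (· ^ k)).sum) e₀) :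
    ∀ᶠ e in 𝓝 e₀, (s e).card = (s e₀).card := by
  have hcard : ContinuousAt (fun e ↦ ((s e).card : ℝ)) e₀ := by
    simpa using (hs 0).continuousAt.norm
  have hcard' : ContinuousAt (fun e ↦ (s e).card) e₀ :=
    Nat.isClosedEmbedding_coe_real.isInducing.continuousAt_iff.2 hcard
  rw [ContinuousAt, nhds_discrete ℕ] at hcard'
  exact tendsto_pure.1 hcard'

lemma analyticAt_prod (hs : ∀ k : ℕ, AnalyticAt ℂ (fun e ↦ ((s e).map (· ^ k)).sum) e₀) :
    AnalyticAt ℂ (fun e ↦ (s e).prod) e₀ := by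
  refine (analyticAt_esymm hs (s e₀).card).congr ?_
  filter_upwards [eventually_card_eq hs] with e he
  simp [← he, Multiset.esymm, Multiset.powersetCard_self]

end PowerSums

section Hurwitz

lemma exists_mem_ball_eq_zero_of_norm_lt {f : ℂ → ℂ} {c : ℂ} {r : ℝ} (hr : 0 < r)
    (hf : DiffContOnCl ℂ f (ball c r)) (hlt : ∀ z ∈ sphere c r, ‖f c‖ < ‖f z‖) :
    ∃ z ∈ ball c r, f z = 0 := by
  by_contra! hne
  have hinv : DiffContOnCl ℂ f⁻¹ (ball c r) := hf.inv fun z hz ↦ by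
    rw [closure_ball c hr.ne', ← ball_union_sphere] at hz
    exact hz.elim (hne z) fun hz ↦ norm_pos_iff.1 ((norm_nonneg _).trans_lt (hlt z hz))
  have hcont : ContinuousOn (fun z ↦ ‖f z‖) (sphere c r) :=
    (hf.continuousOn_ball.mono sphere_subset_closedBall).norm
  obtain ⟨z₁, hz₁, hmin⟩ := (isCompact_sphere c r).exists_isMinOn
    (NormedSpace.sphere_nonempty.2 hr.le) hcont
  have hpos : 0 < ‖f z₁‖ := (norm_nonneg _).trans_lt (hlt z₁ hz₁)
  have hmax : ‖f⁻¹ c‖ ≤ ‖f z₁‖⁻¹ := by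
    refine norm_le_of_forall_mem_frontier_norm_le isBounded_ball hinv (fun z hz ↦ ?_)
      (subset_closure (mem_ball_self hr))
    rw [frontier_ball c hr.ne'] at hz
    rw [Pi.inv_apply, norm_inv]
    exact inv_anti₀ hpos (hmin hz)
  rw [Pi.inv_apply, norm_inv,
    inv_le_inv₀ (norm_pos_iff.2 (hne c (mem_ball_self hr))) hpos] at hmax
  exact (hlt z₁ hz₁).not_ge hmax

theorem eventually_exists_eq_zero {E : Type*} [NormedAddCommGroup E] [NormedSpace ℂ E]
    {R : ℂ × E → ℂ} {z₀ : ℂ} {e₀ : E} (hR : AnalyticAt ℂ R (z₀, e₀)) (hR₀ : R (z₀, e₀) = 0)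
    (hne : ∀ᶠ z in 𝓝[≠] z₀, R (z, e₀) ≠ 0) {s : Set ℂ} (hs : s ∈ 𝓝 z₀) :
    ∀ᶠ e in 𝓝 e₀, ∃ z ∈ s, R (z, e) = 0 := by
  have han : ∀ᶠ z in 𝓝 z₀, AnalyticAt ℂ R (z, e₀) :=
    (continuous_id.prodMk continuous_const).continuousAt.eventually hR.eventually_analyticAt
  obtain ⟨r, hr, hrs⟩ := nhds_basis_closedBall.mem_iff.1
    (inter_mem hs (inter_mem han (eventually_nhdsWithin_iff.1 hne)))
  have hcont {z : ℂ} (hz : z ∈ closedBall z₀ r) :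
      ContinuousAt (fun p : E × ℂ ↦ R (p.2, p.1)) (e₀, z) :=
    ((hrs hz).2.1.continuousAt).comp (f := fun p : E × ℂ ↦ (p.2, p.1)) (by fun_prop)
  have hslice : ∀ᶠ e in 𝓝 e₀, ∀ z ∈ closedBall z₀ r, AnalyticAt ℂ R (z, e) :=
    (isCompact_closedBall z₀ r).eventually_forall_of_forall_eventually fun z hz ↦
      continuous_swap.continuousAt.eventually (hrs hz).2.1.eventually_analyticAt
  have hlt : ∀ᶠ e in 𝓝 e₀, ∀ z ∈ sphere z₀ r, ‖R (z₀, e)‖ < ‖R (z, e)‖ := by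
    refine (isCompact_sphere z₀ r).eventually_forall_of_forall_eventually fun z hz ↦ ?_
    have hcentre : ContinuousAt (fun p : E × ℂ ↦ R (z₀, p.1)) (e₀, z) :=
      hR.continuousAt.comp (f := fun p : E × ℂ ↦ (z₀, p.1)) (by fun_prop)
    refine hcentre.norm.eventually_lt (hcont (sphere_subset_closedBall hz)).norm ?_
    rw [hR₀, norm_zero, norm_pos_iff]
    exact (hrs (sphere_subset_closedBall hz)).2.2 (ne_of_mem_sphere hz hr.ne')
  filter_upwards [hslice, hlt] with e hslice hlt
  have hdiff : AnalyticOnNhd ℂ (fun z ↦ R (z, e)) (closedBall z₀ r) :=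
    fun z hz ↦ (hslice z hz).along_fst
  obtain ⟨z, hz, hz₀⟩ := exists_mem_ball_eq_zero_of_norm_lt hr
    (hdiff.differentiableOn.diffContOnCl_ball le_rfl) hlt
  exact ⟨z, (hrs (ball_subset_closedBall hz)).1, hz₀⟩

end Hurwitz

section Resultant

/-- The resultant of `f - a` and `g - b` with respect to the second variable: at `e = (z, a, b)`,
the product of `g (z, w) - b` over the zeros `w` of `f (z, ·) - a` in the closed disc of radius `r`,
with multiplicity. It vanishes when `(f, g)` takes the value `(a, b)` at some `(z, w)`. -/
noncomputable def discResultant (f g : ℂ × ℂ → ℂ) (r : ℝ) (e : ℂ × ℂ × ℂ) : ℂ :=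
  ((zerosIn (fun w ↦ f (e.1, w) - e.2.1) (closedBall 0 r)).map fun w ↦ g (e.1, w) - e.2.2).prod

variable {f g : ℂ × ℂ → ℂ} {r : ℝ}

lemma analyticAt_discResultant (hr : 0 < r) (hf : ∀ w ∈ closedBall 0 r, AnalyticAt ℂ f (0, w))
    (hg : ∀ w ∈ closedBall 0 r, AnalyticAt ℂ g (0, w)) (hf₀ : ∀ w ∈ sphere 0 r, f (0, w) ≠ 0) :
    AnalyticAt ℂ (discResultant f g r) 0 := by
  have ha : AnalyticAt ℂ (fun e : ℂ × ℂ × ℂ ↦ e.2.1) 0 := analyticAt_fst.comp analyticAt_snd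
  have hb : AnalyticAt ℂ (fun e : ℂ × ℂ × ℂ ↦ e.2.2) 0 := analyticAt_snd.comp analyticAt_snd
  have hfa : HolomorphicFamilyAt 0 r (fun (e : ℂ × ℂ × ℂ) w ↦ f (e.1, w) - e.2.1) 0 :=
    ((HolomorphicFamilyAt.of_analyticAt hf).comp (u := Prod.fst) analyticAt_fst).sub_scalar ha
  have hgb : HolomorphicFamilyAt 0 r (fun (e : ℂ × ℂ × ℂ) w ↦ g (e.1, w) - e.2.2) 0 :=
    ((HolomorphicFamilyAt.of_analyticAt hg).comp (u := Prod.fst) analyticAt_fst).sub_scalar hb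
  have hfa' : AnalyticFamilyAt (fun (e : ℂ × ℂ × ℂ) (ζ : sphere (0 : ℂ) r) ↦
      deriv (fun w ↦ f (e.1, w) - e.2.1) ζ) 0 := by
    simp only [deriv_sub_const]
    exact AnalyticFamilyAt.comp (u := Prod.fst)
      (φ := fun z (ζ : sphere (0 : ℂ) r) ↦ deriv (fun w ↦ f (z, w)) ζ)
      (.deriv_of_analyticAt fun w hw ↦ hf w (sphere_subset_closedBall hw)) analyticAt_fst
  refine analyticAt_prod fun k ↦ ?_
  simp only [Multiset.map_map, Function.comp_def]
  exact (hgb.pow k).analyticAt_sum_zerosIn hr hfa hfa' (by simpa using hf₀)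

lemma eventually_discResultant_eq_zero_iff (hr : 0 < r)
    (hf : ∀ w ∈ closedBall 0 r, AnalyticAt ℂ f (0, w)) (hf₀ : ∀ w ∈ sphere 0 r, f (0, w) ≠ 0) :
    ∀ᶠ e in 𝓝 0, discResultant f g r e = 0 ↔
      ∃ w ∈ closedBall 0 r, f (e.1, w) = e.2.1 ∧ g (e.1, w) = e.2.2 := by
  have hslice : ∀ᶠ e : ℂ × ℂ × ℂ in 𝓝 0, AnalyticOnNhd ℂ (fun w ↦ f (e.1, w)) (closedBall 0 r) :=
    (continuous_fst.tendsto (0 : ℂ × ℂ × ℂ)).eventually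
      (HolomorphicFamilyAt.of_analyticAt hf).analyticOnNhd
  obtain ⟨w₀, hw₀⟩ : (sphere (0 : ℂ) r).Nonempty := NormedSpace.sphere_nonempty.2 hr.le
  have hw₀' : w₀ ∈ closedBall 0 r := sphere_subset_closedBall hw₀
  have hne : ∀ᶠ e : ℂ × ℂ × ℂ in 𝓝 0, f (e.1, w₀) - e.2.1 ≠ 0 := by
    refine ContinuousAt.eventually_ne (.sub ?_ (by fun_prop)) (by simpa using hf₀ w₀ hw₀)
    exact (hf w₀ hw₀').continuousAt.comp (f := fun e : ℂ × ℂ × ℂ ↦ (e.1, w₀)) (by fun_prop)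
  filter_upwards [hslice, hne] with e hslice hne
  have hzeros (w : ℂ) : w ∈ zerosIn (fun w ↦ f (e.1, w) - e.2.1) (closedBall 0 r) ↔
      w ∈ closedBall 0 r ∧ f (e.1, w) - e.2.1 = 0 :=
    mem_zerosIn (isCompact_closedBall 0 r) (convex_closedBall 0 r).isPreconnected
      (nontrivial_closedBall hr) (hslice.sub analyticOnNhd_const) ⟨w₀, hw₀', hne⟩
  simp [discResultant, Multiset.prod_eq_zero_iff, hzeros, sub_eq_zero, and_assoc]

theorem nhds_le_map_of_isolated_zero (hf : AnalyticAt ℂ f 0) (hg : AnalyticAt ℂ g 0)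
    (hf0 : f 0 = 0) (hg0 : g 0 = 0) (hreg : ¬ ∀ᶠ w in 𝓝 0, f (0, w) = 0)
    (hiso : ∀ᶠ p in 𝓝 0, f p = 0 → g p = 0 → p = 0) :
    𝓝 0 ≤ map (fun p ↦ (f p, g p)) (𝓝 0) := by
  refine le_map fun W hW ↦ ?_
  have hf_axis : AnalyticAt ℂ (fun w ↦ f (0, w)) 0 := hf.along_snd
  have hne : ∀ᶠ p : ℂ × ℂ in 𝓝 0, p.2 ≠ 0 → f (0, p.2) ≠ 0 :=
    (continuous_snd.tendsto (0 : ℂ × ℂ)).eventually <| eventually_nhdsWithin_iff.1 <|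
      hf_axis.eventually_eq_zero_or_eventually_ne_zero.resolve_left hreg
  obtain ⟨r, hr, hball⟩ := nhds_basis_closedBall.eventually_iff.1 <|
    hf.eventually_analyticAt.and <| hg.eventually_analyticAt.and <|
      hne.and <| hiso.and <| eventually_mem_set.2 hW
  have hmem {z w : ℂ} (hz : z ∈ closedBall 0 r) (hw : w ∈ closedBall 0 r) :=
    hball (x := (z, w)) (by
      rw [← Prod.mk_zero_zero, ← closedBall_prod_same]
      exact ⟨hz, hw⟩)
  have h0 : (0 : ℂ) ∈ closedBall 0 r := mem_closedBall_self hr.le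
  have hf_disc (w : ℂ) (hw : w ∈ closedBall 0 r) := (hmem h0 hw).1
  have hf_circle (w : ℂ) (hw : w ∈ sphere 0 r) : f (0, w) ≠ 0 :=
    (hmem h0 (sphere_subset_closedBall hw)).2.2.1 (ne_of_mem_sphere hw hr.ne')
  have hR := analyticAt_discResultant hr hf_disc (fun w hw ↦ (hmem h0 hw).2.1) hf_circle
  have hzero := eventually_discResultant_eq_zero_iff (g := g) hr hf_disc hf_circle
  have hR₀ : discResultant f g r 0 = 0 := hzero.self_of_nhds.2 ⟨0, h0, hf0, hg0⟩
  obtain ⟨p, hp, q, hq, hpq⟩ := eventually_prod_iff.1 <|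
    (nhds_prod_eq (x := (0 : ℂ)) (y := (0 : ℂ × ℂ))) ▸ hzero
  have hs : {z | p z} ∩ closedBall 0 r ∈ 𝓝 0 := inter_mem hp (closedBall_mem_nhds 0 hr)
  have hR_axis : ∀ᶠ z in 𝓝[≠] 0, discResultant f g r (z, 0) ≠ 0 := by
    filter_upwards [nhdsWithin_le_nhds hs, self_mem_nhdsWithin] with z hz hz0 hRz
    obtain ⟨w, hw, hfw, hgw⟩ := (hpq hz.1 hq.self_of_nhds).1 hRz
    exact hz0 (congrArg Prod.fst ((hmem hz.2 hw).2.2.2.1 hfw hgw))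
  filter_upwards [eventually_exists_eq_zero hR hR₀ hR_axis hs, hq] with e ⟨z, hz, hRz⟩ he
  obtain ⟨w, hw, hfw, hgw⟩ := (hpq hz.1 he).1 hRz
  exact ⟨(z, w), (hmem hz.2 hw).2.2.2.2, Prod.ext hfw hgw⟩

end Resultant

section WeierstrassPolynomial

variable {E : Type*} [NormedAddCommGroup E] [NormedSpace ℂ E]

lemma analyticAt_coeff_prod_X_sub_C {s : E → Multiset ℂ} {e₀ : E}
    (hs : ∀ k : ℕ, AnalyticAt ℂ (fun e ↦ ((s e).map (· ^ k)).sum) e₀) (k : ℕ) :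
    AnalyticAt ℂ (fun e ↦ ((s e).map (X - C ·)).prod.coeff k) e₀ := by
  obtain hk | hk := le_or_gt k (s e₀).card
  · refine (analyticAt_const.fun_mul (analyticAt_esymm hs ((s e₀).card - k))).congr
      (f := fun e ↦ (-1) ^ ((s e₀).card - k) * (s e).esymm ((s e₀).card - k)) ?_
    filter_upwards [eventually_card_eq hs] with e he
    rw [Multiset.prod_X_sub_C_coeff _ (he ▸ hk), he]
  · refine (analyticAt_const (v := (0 : ℂ))).congr ?_
    filter_upwards [eventually_card_eq hs] with e he
    rw [coeff_eq_zero_of_natDegree_lt]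
    rwa [natDegree_multiset_prod_X_sub_C_eq_card, he]

lemma analyticAt_eval {p : E → ℂ[X]} {e₀ : E} {n : ℕ}
    (hp : ∀ k, AnalyticAt ℂ (fun e ↦ (p e).coeff k) e₀)
    (hn : ∀ᶠ e in 𝓝 e₀, (p e).natDegree = n) (w₀ : ℂ) :
    AnalyticAt ℂ (fun q : E × ℂ ↦ (p q.1).eval q.2) (e₀, w₀) := by
  have hsum : AnalyticAt ℂ
      (fun q : E × ℂ ↦ ∑ k ∈ Finset.range (n + 1), (p q.1).coeff k * q.2 ^ k) (e₀, w₀) :=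
    Finset.analyticAt_fun_sum _ fun k _ ↦
      ((hp k).fun_comp_of_eq analyticAt_fst rfl).fun_mul (analyticAt_snd.fun_pow k)
  refine hsum.congr ?_
  filter_upwards [continuousAt_fst.eventually hn] with q hq
  rw [eval_eq_sum_range, hq]

/-- The Weierstrass polynomial of `f` over `z`: the monic polynomial whose roots are the zeros of
`f (z, ·)` in the closed disc of radius `r`, with multiplicity. -/
noncomputable def weierstrassPolynomial (f : ℂ × ℂ → ℂ) (r : ℝ) (z : ℂ) : ℂ[X] :=
  ((zerosIn (fun w ↦ f (z, w)) (closedBall 0 r)).map (X - C ·)).prod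

variable {f : ℂ × ℂ → ℂ} {r : ℝ} {z₀ : ℂ}

lemma monic_weierstrassPolynomial (z : ℂ) : (weierstrassPolynomial f r z).Monic :=
  monic_multiset_prod_of_monic _ _ fun w _ ↦ monic_X_sub_C w

lemma weierstrassPolynomial_eq_X_pow (h₀ : ∀ w ∈ closedBall 0 r, f (z₀, w) = 0 → w = 0)
    (hr : 0 < r) (hf : ∀ w ∈ closedBall 0 r, AnalyticAt ℂ f (z₀, w)) :
    ∃ m : ℕ, weierstrassPolynomial f r z₀ = X ^ m := by
  obtain ⟨w₀, hw₀⟩ : (sphere (0 : ℂ) r).Nonempty := NormedSpace.sphere_nonempty.2 hr.le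
  have hne : f (z₀, w₀) ≠ 0 :=
    fun h ↦ ne_of_mem_sphere hw₀ hr.ne' (h₀ w₀ (sphere_subset_closedBall hw₀) h)
  have hzeros : ∀ w ∈ zerosIn (fun w ↦ f (z₀, w)) (closedBall 0 r), w = 0 := fun w hw ↦ by
    obtain ⟨hw, hfw⟩ := (mem_zerosIn (isCompact_closedBall 0 r)
      (convex_closedBall 0 r).isPreconnected (nontrivial_closedBall hr)
      (fun w hw ↦ (hf w hw).along_snd) ⟨w₀, sphere_subset_closedBall hw₀, hne⟩).1 hw
    exact h₀ w hw hfw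
  refine ⟨(zerosIn (fun w ↦ f (z₀, w)) (closedBall 0 r)).card, ?_⟩
  rw [weierstrassPolynomial, Multiset.eq_replicate_card.2 hzeros]
  simp

lemma analyticAt_sum_pow_zerosIn (hr : 0 < r) (hf : ∀ w ∈ closedBall 0 r, AnalyticAt ℂ f (z₀, w))
    (hf₀ : ∀ w ∈ sphere 0 r, f (z₀, w) ≠ 0) (k : ℕ) :
    AnalyticAt ℂ (fun z ↦ ((zerosIn (fun w ↦ f (z, w)) (closedBall 0 r)).map (· ^ k)).sum) z₀ :=
  HolomorphicFamilyAt.analyticAt_sum_zerosIn (φ := fun _ w ↦ w ^ k) hr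
    (.of_analyticAt (f := fun q ↦ q.2 ^ k) fun _ _ ↦ analyticAt_snd.pow k) (.of_analyticAt hf)
    (.deriv_of_analyticAt fun w hw ↦ hf w (sphere_subset_closedBall hw)) hf₀

lemma analyticAt_coeff_weierstrassPolynomial (hr : 0 < r)
    (hf : ∀ w ∈ closedBall 0 r, AnalyticAt ℂ f (z₀, w)) (hf₀ : ∀ w ∈ sphere 0 r, f (z₀, w) ≠ 0)
    (k : ℕ) : AnalyticAt ℂ (fun z ↦ (weierstrassPolynomial f r z).coeff k) z₀ :=
  analyticAt_coeff_prod_X_sub_C (analyticAt_sum_pow_zerosIn hr hf hf₀) k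

lemma eventually_natDegree_weierstrassPolynomial_eq (hr : 0 < r)
    (hf : ∀ w ∈ closedBall 0 r, AnalyticAt ℂ f (z₀, w)) (hf₀ : ∀ w ∈ sphere 0 r, f (z₀, w) ≠ 0) :
    ∀ᶠ z in 𝓝 z₀,
      (weierstrassPolynomial f r z).natDegree = (weierstrassPolynomial f r z₀).natDegree := by
  simpa only [weierstrassPolynomial, natDegree_multiset_prod_X_sub_C_eq_card] using
    eventually_card_eq (analyticAt_sum_pow_zerosIn hr hf hf₀)

lemma eventually_exists_eq_weierstrassPolynomial_mul (hr : 0 < r)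
    (hf : ∀ w ∈ closedBall 0 r, AnalyticAt ℂ f (z₀, w)) (hf₀ : ∀ w ∈ sphere 0 r, f (z₀, w) ≠ 0) :
    ∀ᶠ z in 𝓝 z₀, ∃ u : ℂ → ℂ, AnalyticOnNhd ℂ u (closedBall 0 r) ∧
      (∀ w ∈ closedBall 0 r, u w ≠ 0) ∧
      ∀ w ∈ closedBall 0 r, f (z, w) = (weierstrassPolynomial f r z).eval w * u w := by
  obtain ⟨w₁, hw₁⟩ : (sphere (0 : ℂ) r).Nonempty := NormedSpace.sphere_nonempty.2 hr.le
  have hw₁' : w₁ ∈ closedBall 0 r := sphere_subset_closedBall hw₁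
  have hne : ∀ᶠ z in 𝓝 z₀, f (z, w₁) ≠ 0 :=
    (hf w₁ hw₁').along_fst.continuousAt.eventually_ne (hf₀ w₁ hw₁)
  filter_upwards [(HolomorphicFamilyAt.of_analyticAt hf).analyticOnNhd, hne] with z hfz hne
  obtain ⟨u, hu, hu₀, hEq⟩ := exists_eventuallyEq_prod_zerosIn_mul (isCompact_closedBall 0 r)
    (convex_closedBall 0 r).isPreconnected (nontrivial_closedBall hr) hfz ⟨w₁, hw₁', hne⟩
  exact ⟨u, hu, hu₀, fun w hw ↦ (hEq w hw).self_of_nhds⟩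

theorem exists_eventuallyEq_weierstrassPolynomial_mul (hr : 0 < r)
    (hf : ∀ w ∈ closedBall 0 r, AnalyticAt ℂ f (z₀, w)) (hf₀ : ∀ w ∈ sphere 0 r, f (z₀, w) ≠ 0)
    {w₀ : ℂ} (hw₀ : w₀ ∈ ball 0 r) :
    ∃ u : ℂ × ℂ → ℂ, AnalyticAt ℂ u (z₀, w₀) ∧ u (z₀, w₀) ≠ 0 ∧
      ∀ᶠ q in 𝓝 (z₀, w₀), f q = (weierstrassPolynomial f r q.1).eval q.2 * u q := by
  obtain ⟨u, hu⟩ := (eventually_exists_eq_weierstrassPolynomial_mul hr hf hf₀).choice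
  have hP (w : ℂ) := analyticAt_eval (analyticAt_coeff_weierstrassPolynomial hr hf hf₀)
    (eventually_natDegree_weierstrassPolynomial_eq hr hf hf₀) w
  have hP₀ : ∀ w ∈ sphere 0 r, (weierstrassPolynomial f r z₀).eval w ≠ 0 := fun w hw ↦
    left_ne_zero_of_mul ((hu.self_of_nhds.2.2 w (sphere_subset_closedBall hw)) ▸ hf₀ w hw)
  have hfam : HolomorphicFamilyAt 0 r u z₀ := by
    refine ⟨hu.mono fun _ h ↦ h.1, .congr (.of_analyticAt
      (f := fun q ↦ f q * ((weierstrassPolynomial f r q.1).eval q.2)⁻¹) fun w hw ↦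
        (hf w (sphere_subset_closedBall hw)).mul ((hP w).inv (hP₀ w hw))) ?_⟩
    have hPne : ∀ᶠ z in 𝓝 z₀, ∀ w : sphere (0 : ℂ) r,
        (weierstrassPolynomial f r z).eval (w : ℂ) ≠ 0 :=
      (AnalyticFamilyAt.of_analyticAt fun w _ ↦ hP w).eventually_ne_zero fun w ↦ hP₀ w w.2
    filter_upwards [hu, hPne] with z hz hPz
    ext w
    rw [hz.2.2 w (sphere_subset_closedBall w.2), mul_right_comm, mul_inv_cancel₀ (hPz w), one_mul]
  refine ⟨uncurry u, hfam.analyticAt_uncurry hw₀,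
    hu.self_of_nhds.2.1 w₀ (ball_subset_closedBall hw₀), ?_⟩
  filter_upwards [prod_mem_nhds hu (isOpen_ball.mem_nhds hw₀)] with q ⟨hq, hqr⟩
  exact hq.2.2 q.2 (ball_subset_closedBall hqr)

end WeierstrassPolynomial

section Germs

variable {E F : Type*} [NormedAddCommGroup E] [NormedSpace ℂ E] [NormedAddCommGroup F]
  [NormedSpace ℂ F]

/-- The ring of germs at `x` of functions that are analytic at `x`. -/
def AnalyticGerm (x : E) : Subring (Germ (𝓝 x) ℂ) where
  carrier := {φ | ∃ f : E → ℂ, AnalyticAt ℂ f x ∧ φ = f}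
  mul_mem' := by
    rintro _ _ ⟨f, hf, rfl⟩ ⟨g, hg, rfl⟩
    exact ⟨f * g, hf.mul hg, rfl⟩
  one_mem' := ⟨1, analyticAt_const, rfl⟩
  add_mem' := by
    rintro _ _ ⟨f, hf, rfl⟩ ⟨g, hg, rfl⟩
    exact ⟨f + g, hf.add hg, rfl⟩
  zero_mem' := ⟨0, analyticAt_const, rfl⟩
  neg_mem' := by
    rintro _ ⟨f, hf, rfl⟩
    exact ⟨-f, hf.neg, rfl⟩

namespace AnalyticGerm

variable {x : E} {y : F} {f g : E → ℂ}

/-- The germ at `x` of a function that is analytic at `x`. -/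
def of (f : E → ℂ) (hf : AnalyticAt ℂ f x) : AnalyticGerm x :=
  ⟨f, f, hf, rfl⟩

lemma exists_eq_of (a : AnalyticGerm x) : ∃ (f : E → ℂ) (hf : AnalyticAt ℂ f x), a = of f hf := by
  obtain ⟨_, f, hf, rfl⟩ := a
  exact ⟨f, hf, rfl⟩

lemma of_eq_of_iff {hf : AnalyticAt ℂ f x} {hg : AnalyticAt ℂ g x} :
    of f hf = of g hg ↔ f =ᶠ[𝓝 x] g :=
  Subtype.ext_iff.trans Germ.coe_eq

lemma of_eq_zero_iff {hf : AnalyticAt ℂ f x} : of f hf = 0 ↔ ∀ᶠ z in 𝓝 x, f z = 0 :=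
  of_eq_of_iff (g := 0) (hg := analyticAt_const)

lemma of_mul_of (hf : AnalyticAt ℂ f x) (hg : AnalyticAt ℂ g x) :
    of f hf * of g hg = of (fun z ↦ f z * g z) (hf.mul hg) := rfl

lemma sum_of {ι : Type*} (s : Finset ι) {F : ι → E → ℂ} (hF : ∀ i, AnalyticAt ℂ (F i) x) :
    ∑ i ∈ s, of (F i) (hF i) =
      of (fun z ↦ ∑ i ∈ s, F i z) (Finset.analyticAt_fun_sum s fun i _ ↦ hF i) := by
  classical
  induction s using Finset.induction_on with
  | empty => rfl
  | insert i s hi ih =>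
    rw [Finset.sum_insert hi, ih]
    exact (of_eq_of_iff (hf := (hF i).add (Finset.analyticAt_fun_sum s fun i _ ↦ hF i))).2
      (.of_forall fun z ↦ by simp [Finset.sum_insert hi])

/-- Evaluation of germs at the base point. -/
def value : AnalyticGerm x →+* ℂ :=
  Germ.valueRingHom.comp (AnalyticGerm x).subtype

lemma value_of (hf : AnalyticAt ℂ f x) : value (of f hf) = f x := rfl

lemma isUnit_iff_value_ne_zero {a : AnalyticGerm x} : IsUnit a ↔ value a ≠ 0 := by
  refine ⟨fun ha ↦ (ha.map value).ne_zero, fun ha ↦ ?_⟩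
  obtain ⟨f, hf, rfl⟩ := exists_eq_of a
  refine .of_mul_eq_one (of f⁻¹ (hf.inv ha)) ?_
  refine (of_mul_of _ _).trans <| (of_eq_of_iff (hg := analyticAt_const)).2 ?_
  filter_upwards [hf.continuousAt.eventually_ne ha] with z hz
  exact mul_inv_cancel₀ hz

/-- Composition of germs with an analytic map. -/
def pullback (u : E → F) (hu : AnalyticAt ℂ u x) (hxy : u x = y) :
    AnalyticGerm y →+* AnalyticGerm x where
  toFun a := ⟨(a : Germ (𝓝 y) ℂ).compTendsto u (hxy ▸ hu.continuousAt), by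
    obtain ⟨_, f, hf, rfl⟩ := a
    exact ⟨f ∘ u, AnalyticAt.comp_of_eq hf hu hxy, rfl⟩⟩
  map_one' := rfl
  map_zero' := rfl
  map_mul' := by
    rintro ⟨_, f, hf, rfl⟩ ⟨_, g, hg, rfl⟩
    rfl
  map_add' := by
    rintro ⟨_, f, hf, rfl⟩ ⟨_, g, hg, rfl⟩
    rfl

lemma pullback_of {f : F → ℂ} {u : E → F} (hf : AnalyticAt ℂ f y) (hu : AnalyticAt ℂ u x)
    (hxy : u x = y) : pullback u hu hxy (of f hf) = of (f ∘ u) (hf.comp_of_eq hu hxy) := rfl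

lemma value_pullback {u : E → F} (hu : AnalyticAt ℂ u x) (hxy : u x = y) (a : AnalyticGerm y) :
    value (pullback u hu hxy a) = value a := by
  obtain ⟨f, hf, rfl⟩ := exists_eq_of a
  exact congrArg f hxy

instance isLocalHom_pullback (u : E → F) (hu : AnalyticAt ℂ u x) (hxy : u x = y) :
    IsLocalHom (pullback u hu hxy) where
  map_nonunit a ha := by
    rw [isUnit_iff_value_ne_zero] at ha ⊢
    rwa [← value_pullback hu hxy a]

end AnalyticGerm

end Germs

section OneVariable

namespace AnalyticGerm

variable {z₀ : ℂ}

lemma eventually_ne_zero {f : ℂ → ℂ} {hf : AnalyticAt ℂ f z₀} (h : of f hf ≠ 0) :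
    ∀ᶠ z in 𝓝[≠] z₀, f z ≠ 0 :=
  hf.eventually_eq_zero_or_eventually_ne_zero.resolve_left (of_eq_zero_iff.not.1 h)

instance : Nontrivial (AnalyticGerm z₀) := value.domain_nontrivial

instance : IsDomain (AnalyticGerm z₀) :=
  have : NoZeroDivisors (AnalyticGerm z₀) := ⟨fun {a b} hab ↦ by
    obtain ⟨f, hf, rfl⟩ := exists_eq_of a
    obtain ⟨g, hg, rfl⟩ := exists_eq_of b
    by_contra! hne
    have hfg : ∀ᶠ z in 𝓝[≠] z₀, f z * g z = 0 :=
      nhdsWithin_le_nhds ((of_eq_zero_iff (hf := hf.mul hg)).1 hab)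
    obtain ⟨z, hz, hfz, hgz⟩ :=
      (hfg.and ((eventually_ne_zero hne.1).and (eventually_ne_zero hne.2))).exists
    exact mul_ne_zero hfz hgz hz⟩
  NoZeroDivisors.to_isDomain _

lemma exists_associated_pow {a : AnalyticGerm z₀} (ha : a ≠ 0) :
    ∃ n : ℕ, Associated a (of (· - z₀) (by fun_prop) ^ n) := by
  obtain ⟨f, hf, rfl⟩ := exists_eq_of a
  obtain ⟨n, g, hg, hg₀, hEq⟩ :=
    hf.exists_eventuallyEq_pow_smul_nonzero_iff.2 (of_eq_zero_iff.not.1 ha)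
  have hunit : IsUnit (of g hg) := isUnit_iff_value_ne_zero.2 hg₀
  refine ⟨n, Associated.symm ⟨hunit.unit, ?_⟩⟩
  exact (of_eq_of_iff (f := (· - z₀) ^ n * g) (hf := .mul (.pow (by fun_prop) n) hg)).2
    (EventuallyEq.symm hEq)

instance : ValuationRing (AnalyticGerm z₀) :=
  ValuationRing.iff_dvd_total.2 ⟨fun a b ↦ by
    obtain rfl | ha := eq_or_ne a 0
    · exact .inr (dvd_zero b)
    obtain rfl | hb := eq_or_ne b 0
    · exact .inl (dvd_zero a)
    obtain ⟨m, hm⟩ := exists_associated_pow ha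
    obtain ⟨n, hn⟩ := exists_associated_pow hb
    rw [hm.dvd_iff_dvd_left, hn.dvd_iff_dvd_right, hn.dvd_iff_dvd_left, hm.dvd_iff_dvd_right]
    exact (le_total m n).imp (pow_dvd_pow _) (pow_dvd_pow _)⟩

instance : IsIntegrallyClosed (AnalyticGerm z₀) := GCDMonoid.toIsIntegrallyClosed

end AnalyticGerm

end OneVariable

section PolynomialGerms

open AnalyticGerm

/-- The germ at the origin of `ℂ × ℂ` defined by a polynomial in the second coordinate whose
coefficients are germs of analytic functions of the first coordinate. -/
noncomputable def evalSnd : (AnalyticGerm (0 : ℂ))[X] →+* AnalyticGerm (0 : ℂ × ℂ) :=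
  eval₂RingHom (pullback Prod.fst analyticAt_fst rfl) (of Prod.snd analyticAt_snd)

lemma evalSnd_C (a : AnalyticGerm (0 : ℂ)) :
    evalSnd (C a) = pullback Prod.fst analyticAt_fst rfl a :=
  eval₂_C _ _

lemma value_evalSnd (P : (AnalyticGerm (0 : ℂ))[X]) :
    value (evalSnd P) = (P.map value).eval 0 := by
  have hcomp : value.comp evalSnd = (evalRingHom 0).comp (mapRingHom value) := by
    refine ringHom_ext (fun a ↦ ?_) ?_
    · simp [evalSnd, value_pullback]
    · simp [evalSnd, value_of]
  exact DFunLike.congr_fun hcomp P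

lemma exists_monic_evalSnd_eq {p : ℂ → ℂ[X]} {n : ℕ} (hmonic : ∀ z, (p z).Monic)
    (hp : ∀ k, AnalyticAt ℂ (fun z ↦ (p z).coeff k) 0) (hn : ∀ᶠ z in 𝓝 0, (p z).natDegree = n) :
    ∃ P : (AnalyticGerm (0 : ℂ))[X], P.Monic ∧ P.map value = p 0 ∧
      evalSnd P = of (fun q : ℂ × ℂ ↦ (p q.1).eval q.2) (analyticAt_eval hp hn 0) := by
  let P : (AnalyticGerm (0 : ℂ))[X] := ∑ k ∈ Finset.range (n + 1), monomial k (of _ (hp k))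
  have hcoeff (k : ℕ) : P.coeff k = of _ (hp k) := by
    suffices n < k → of _ (hp k) = 0 by
      simpa [P, finsetSum_coeff, coeff_monomial, eq_comm, Nat.lt_succ_iff]
    refine fun hk ↦ of_eq_zero_iff.2 ?_
    filter_upwards [hn] with z hz
    exact coeff_eq_zero_of_natDegree_lt (hz ▸ hk)
  have hlead : of _ (hp n) = 1 := by
    refine of_eq_of_iff (hg := analyticAt_const).2 ?_
    filter_upwards [hn] with z hz
    simpa [hz] using (hmonic z).coeff_natDegree
  refine ⟨P, monic_of_natDegree_le_of_coeff_eq_one n ?_ (hcoeff n ▸ hlead), ?_, ?_⟩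
  · exact natDegree_sum_le_of_forall_le _ _ fun k hk ↦
      (natDegree_monomial_le _).trans (Finset.mem_range_succ_iff.1 hk)
  · ext k
    rw [coeff_map, hcoeff, value_of]
  · have hterm (k : ℕ) : evalSnd (monomial k (of _ (hp k))) =
        of (fun q ↦ (p q.1).coeff k * q.2 ^ k) (((hp k).fun_comp_of_eq analyticAt_fst rfl).fun_mul
          (analyticAt_snd.fun_pow k)) := eval₂_monomial _ _
    rw [map_sum, Finset.sum_congr rfl fun k _ ↦ hterm k, sum_of, of_eq_of_iff]
    filter_upwards [continuousAt_fst.eventually hn] with q hq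
    rw [eval_eq_sum_range, hq]

theorem exists_monic_associated_evalSnd {f : ℂ × ℂ → ℂ} (hf : AnalyticAt ℂ f 0)
    (hreg : ¬ ∀ᶠ w in 𝓝 0, f (0, w) = 0) :
    ∃ P : (AnalyticGerm (0 : ℂ))[X], P.Monic ∧ (∃ m : ℕ, P.map value = X ^ m) ∧
      Associated (of f hf) (evalSnd P) := by
  have hf_axis : AnalyticAt ℂ (fun w ↦ f (0, w)) 0 := hf.along_snd
  have hne : ∀ᶠ w in 𝓝 0, w ≠ 0 → f (0, w) ≠ 0 := eventually_nhdsWithin_iff.1 <|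
    hf_axis.eventually_eq_zero_or_eventually_ne_zero.resolve_left hreg
  have hcont : ContinuousAt (fun w : ℂ ↦ ((0, w) : ℂ × ℂ)) 0 := by fun_prop
  obtain ⟨r, hr, hball⟩ := nhds_basis_closedBall.eventually_iff.1 <|
    (hcont.eventually hf.eventually_analyticAt).and hne
  have hfr (w : ℂ) (hw : w ∈ closedBall 0 r) : AnalyticAt ℂ f (0, w) := (hball hw).1
  have hfr₀ (w : ℂ) (hw : w ∈ sphere 0 r) : f (0, w) ≠ 0 :=
    (hball (sphere_subset_closedBall hw)).2 (ne_of_mem_sphere hw hr.ne')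
  obtain ⟨P, hP, hPmap, hPeval⟩ := exists_monic_evalSnd_eq monic_weierstrassPolynomial
    (analyticAt_coeff_weierstrassPolynomial hr hfr hfr₀)
    (eventually_natDegree_weierstrassPolynomial_eq hr hfr hfr₀)
  obtain ⟨u, hu, hu₀, hEq⟩ :=
    exists_eventuallyEq_weierstrassPolynomial_mul hr hfr hfr₀ (mem_ball_self hr)
  have hunit : IsUnit (of u hu) := isUnit_iff_value_ne_zero.2 hu₀
  refine ⟨P, hP, hPmap ▸ weierstrassPolynomial_eq_X_pow
    (fun w hw ↦ not_imp_not.1 (hball hw).2) hr hfr, .symm ⟨hunit.unit, ?_⟩⟩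
  rw [hPeval, IsUnit.unit_spec, of_mul_of, of_eq_of_iff]
  exact EventuallyEq.symm hEq

end PolynomialGerms

section CommonFactors

lemma exists_mul_add_mul_eq_C_resultant_of_monic {R : Type*} [CommRing R] {P : R[X]}
    (hP : P.Monic) (Q : R[X]) : ∃ a b : R[X], P * a + Q * b = C (resultant P Q) := by
  by_cases hdeg : P.natDegree ≠ 0 ∨ Q.natDegree ≠ 0
  · obtain ⟨a, b, -, -, hab⟩ := exists_mul_add_mul_eq_C_resultant P Q le_rfl le_rfl hdeg
    exact ⟨a, b, hab⟩
  · push Not at hdeg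
    obtain rfl := hP.natDegree_eq_zero.1 hdeg.1
    exact ⟨C (resultant 1 Q), 0, by simp⟩

lemma exists_monic_dvd_of_not_isCoprime_map {R K : Type*} [CommRing R] [IsIntegrallyClosed R]
    [Field K] [Algebra R K] [IsFractionRing R K] {P Q : R[X]} (hP : P.Monic)
    (h : ¬ IsCoprime (P.map (algebraMap R K)) (Q.map (algebraMap R K))) :
    ∃ D : R[X], D.Monic ∧ 0 < D.natDegree ∧ D ∣ P ∧ D ∣ Q := by
  classical
  have hinj : Injective (algebraMap R K) := IsFractionRing.injective R K
  let G := EuclideanDomain.gcd (P.map (algebraMap R K)) (Q.map (algebraMap R K))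
  have hGP : G ∣ P.map (algebraMap R K) := EuclideanDomain.gcd_dvd_left _ _
  have hGQ : G ∣ Q.map (algebraMap R K) := EuclideanDomain.gcd_dvd_right _ _
  have hG₀ : G.leadingCoeff ≠ 0 :=
    leadingCoeff_ne_zero.2 (ne_zero_of_dvd_ne_zero (hP.map _).ne_zero hGP)
  obtain ⟨D, hD⟩ := IsIntegrallyClosed.eq_map_mul_C_of_dvd K hP hGP
  have hDG : Associated (D.map (algebraMap R K)) G := ⟨(isUnit_C.2 hG₀.isUnit).unit, hD⟩
  have hDmonic : D.Monic := by
    refine monic_of_injective hinj (mul_right_cancel₀ hG₀ ?_)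
    simpa using congrArg leadingCoeff hD
  refine ⟨D, hDmonic, Nat.pos_of_ne_zero fun hdeg ↦ h ?_,
    (map_dvd_map _ hinj hDmonic).1 (hDG.dvd.trans hGP),
    (map_dvd_map _ hinj hDmonic).1 (hDG.dvd.trans hGQ)⟩
  rw [← EuclideanDomain.gcd_isUnit_iff, ← hDG.isUnit_iff, hDmonic.natDegree_eq_zero.1 hdeg,
    Polynomial.map_one]
  exact isUnit_one

lemma exists_monic_dvd_of_resultant_eq_zero {R : Type*} [CommRing R] [IsDomain R]
    [IsIntegrallyClosed R] {P Q : R[X]} (hP : P.Monic) (h : resultant P Q = 0) :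
    ∃ D : R[X], D.Monic ∧ 0 < D.natDegree ∧ D ∣ P ∧ D ∣ Q := by
  refine exists_monic_dvd_of_not_isCoprime_map (K := FractionRing R) hP
    (resultant_eq_zero_iff.1 ?_).2
  have hinj : Injective (algebraMap R (FractionRing R)) := IsFractionRing.injective R _
  rw [natDegree_map_eq_of_injective hinj, natDegree_map_eq_of_injective hinj, resultant_map_map,
    h, map_zero]

open AnalyticGerm

variable {f g : ℂ × ℂ → ℂ}

lemma not_isUnit_evalSnd_of_dvd {P D : (AnalyticGerm (0 : ℂ))[X]} (hD : D.Monic)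
    (hdeg : 0 < D.natDegree) (hDP : D ∣ P) {m : ℕ} (hP : P.map value = X ^ m) :
    ¬ IsUnit (evalSnd D) := by
  obtain ⟨i, -, hi⟩ := (dvd_prime_pow prime_X m).1 (hP ▸ Polynomial.map_dvd value hDP)
  have hDmap : D.map value = X ^ i := eq_of_monic_of_associated (hD.map _) (monic_X_pow i) hi
  have hi₀ : i ≠ 0 := by
    rintro rfl
    exact hdeg.ne' (by rw [← hD.natDegree_map value, hDmap, natDegree_X_pow])
  simp [isUnit_iff_value_ne_zero, value_evalSnd, hDmap, hi₀]

lemma exists_mul_add_mul_eq_pullback_fst {hf : AnalyticAt ℂ f 0} {hg : AnalyticAt ℂ g 0}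
    (hfreg : ¬ ∀ᶠ w in 𝓝 0, f (0, w) = 0) (hgreg : ¬ ∀ᶠ w in 𝓝 0, g (0, w) = 0)
    (hfg : IsRelPrime (of f hf) (of g hg)) :
    ∃ (s : AnalyticGerm (0 : ℂ)) (a b : AnalyticGerm (0 : ℂ × ℂ)), s ≠ 0 ∧
      of f hf * a + of g hg * b = pullback Prod.fst analyticAt_fst rfl s := by
  obtain ⟨P, hP, ⟨m, hPmap⟩, hfP⟩ := exists_monic_associated_evalSnd hf hfreg
  obtain ⟨Q, -, -, hgQ⟩ := exists_monic_associated_evalSnd hg hgreg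
  obtain ⟨a, b, hab⟩ := exists_mul_add_mul_eq_C_resultant_of_monic hP Q
  have hres : resultant P Q ≠ 0 := fun h ↦ by
    obtain ⟨D, hD, hdeg, hDP, hDQ⟩ := exists_monic_dvd_of_resultant_eq_zero hP h
    exact not_isUnit_evalSnd_of_dvd hD hdeg hDP hPmap <|
      hfg (hfP.dvd_iff_dvd_right.2 (map_dvd evalSnd hDP))
        (hgQ.dvd_iff_dvd_right.2 (map_dvd evalSnd hDQ))
  obtain ⟨u, hu⟩ := hfP
  obtain ⟨v, hv⟩ := hgQ
  refine ⟨resultant P Q, u * evalSnd a, v * evalSnd b, hres, ?_⟩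
  rw [← mul_assoc, hu, ← mul_assoc, hv, ← map_mul, ← map_mul, ← map_add, hab, evalSnd_C]

theorem eventually_eq_zero_of_isRelPrime {hf : AnalyticAt ℂ f 0} {hg : AnalyticAt ℂ g 0}
    (hfreg : ¬ ∀ᶠ w in 𝓝 0, f (0, w) = 0) (hgreg : ¬ ∀ᶠ w in 𝓝 0, g (0, w) = 0)
    (hfg : IsRelPrime (of f hf) (of g hg)) :
    ∀ᶠ p in 𝓝 0, f p = 0 → g p = 0 → p = 0 := by
  obtain ⟨s, a, b, hs, hab⟩ := exists_mul_add_mul_eq_pullback_fst hfreg hgreg hfg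
  obtain ⟨σ, hσ, rfl⟩ := exists_eq_of s
  obtain ⟨α, hα, rfl⟩ := exists_eq_of a
  obtain ⟨β, hβ, rfl⟩ := exists_eq_of b
  have hfst : ∀ᶠ p : ℂ × ℂ in 𝓝 0, p.1 ≠ 0 → σ p.1 ≠ 0 :=
    (continuous_fst.tendsto (0 : ℂ × ℂ)).eventually <| eventually_nhdsWithin_iff.1 <|
      eventually_ne_zero hs
  have hf_axis : AnalyticAt ℂ (fun w ↦ f (0, w)) 0 := hf.along_snd
  have hsnd : ∀ᶠ p : ℂ × ℂ in 𝓝 0, p.2 ≠ 0 → f (0, p.2) ≠ 0 :=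
    (continuous_snd.tendsto (0 : ℂ × ℂ)).eventually <| eventually_nhdsWithin_iff.1 <|
      hf_axis.eventually_eq_zero_or_eventually_ne_zero.resolve_left hfreg
  have hrel : ∀ᶠ p in 𝓝 0, f p * α p + g p * β p = σ p.1 :=
    (of_eq_of_iff (hf := (hf.mul hα).add (hg.mul hβ))
      (hg := hσ.comp_of_eq analyticAt_fst rfl)).1 hab
  filter_upwards [hrel, hfst, hsnd] with ⟨z, w⟩ hrel hfst hsnd hfp hgp
  obtain rfl : z = 0 := not_imp_not.1 hfst (by simpa [hfp, hgp] using hrel.symm)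
  obtain rfl : w = 0 := not_imp_not.1 hsnd hfp
  rfl

end CommonFactors

section LinearCoordinates

variable {E : Type*} [NormedAddCommGroup E] [NormedSpace ℂ E]

lemma exists_mem_ne_zero_and_ne_zero {f g : E → ℂ} {s : Set E} (hs : IsOpen s)
    (hs' : IsPreconnected s) (hf : ContinuousOn f s) (hg : AnalyticOnNhd ℂ g s)
    (hf₀ : ∃ x ∈ s, f x ≠ 0) (hg₀ : ∃ x ∈ s, g x ≠ 0) : ∃ x ∈ s, f x ≠ 0 ∧ g x ≠ 0 := by
  obtain ⟨x, hx, hfx⟩ := hf₀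
  obtain ⟨y, hy, hgy⟩ := hg₀
  by_contra! h
  have hgx : ∀ᶠ z in 𝓝 x, g z = 0 := by
    filter_upwards [hs.mem_nhds hx, (hf.continuousAt (hs.mem_nhds hx)).eventually_ne hfx]
      with z hz hfz using h z hz hfz
  exact hgy (hg.eqOn_zero_of_preconnected_of_eventuallyEq_zero hs' hx hgx hy)

lemma not_eventually_eq_zero_smul {f : E → ℂ} {s : Set E} (hs : Convex ℝ s)
    (hf : AnalyticOnNhd ℂ f s) (h₀ : 0 ∈ s) {v : E} (hv : v ∈ s) (hfv : f v ≠ 0) :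
    ¬ ∀ᶠ w : ℂ in 𝓝 0, f (w • v) = 0 := fun h ↦ by
  let line : ℂ →ₗ[ℝ] E := (LinearMap.toSpanSingleton ℂ E v).restrictScalars ℝ
  have hline : AnalyticOnNhd ℂ (fun w ↦ f (w • v)) (line ⁻¹' s) := fun w hw ↦
    (hf _ hw).fun_comp (analyticAt_id.smul analyticAt_const)
  refine hfv ?_
  simpa using hline.eqOn_zero_of_preconnected_of_eventuallyEq_zero
    (hs.linear_preimage line).isPreconnected (x := 1) (by simpa using h₀) h
    (by simpa [line] using hv)

lemma exists_continuousLinearEquiv_apply_eq_of_finrank_eq_two (hE : Module.finrank ℂ E = 2)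
    {v : E} (hv : v ≠ 0) : ∃ L : (ℂ × ℂ) ≃L[ℂ] E, L (0, 1) = v := by
  have : FiniteDimensional ℂ E := .of_finrank_pos (by simp [hE])
  let L₀ : (ℂ × ℂ) ≃L[ℂ] E := .ofFinrankEq (by simp [hE])
  obtain ⟨A, hA⟩ := SeparatingDual.exists_continuousLinearEquiv_apply_eq (R := ℂ)
    (x := L₀ (0, 1)) (y := v) (by simp) hv
  exact ⟨L₀.trans A, hA⟩

lemma exists_continuousLinearEquiv_not_eventually_eq_zero (hE : Module.finrank ℂ E = 2)
    {f g : E → ℂ} (hf : AnalyticAt ℂ f 0) (hg : AnalyticAt ℂ g 0) (hf₀ : f 0 = 0)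
    (hfne : ¬ ∀ᶠ z in 𝓝 0, f z = 0) (hgne : ¬ ∀ᶠ z in 𝓝 0, g z = 0) :
    ∃ L : (ℂ × ℂ) ≃L[ℂ] E, (¬ ∀ᶠ w in 𝓝 0, f (L (0, w)) = 0) ∧
      ¬ ∀ᶠ w in 𝓝 0, g (L (0, w)) = 0 := by
  obtain ⟨r, hr, hball⟩ := nhds_basis_ball.eventually_iff.1 <|
    hf.eventually_analyticAt.and hg.eventually_analyticAt
  have hfr : AnalyticOnNhd ℂ f (ball 0 r) := fun z hz ↦ (hball hz).1
  have hgr : AnalyticOnNhd ℂ g (ball 0 r) := fun z hz ↦ (hball hz).2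
  have hexists {h : E → ℂ} (hne : ¬ ∀ᶠ z in 𝓝 0, h z = 0) : ∃ x ∈ ball 0 r, h x ≠ 0 := by
    by_contra! hzero
    exact hne (eventually_of_mem (ball_mem_nhds 0 hr) hzero)
  have hconv : Convex ℝ (ball (0 : E) r) := convex_ball 0 r
  obtain ⟨v, hv, hfv, hgv⟩ := exists_mem_ne_zero_and_ne_zero isOpen_ball hconv.isPreconnected
    hfr.continuousOn hgr (hexists hfne) (hexists hgne)
  have hv₀ : v ≠ 0 := fun h ↦ hfv (h ▸ hf₀)
  obtain ⟨L, hLv⟩ := exists_continuousLinearEquiv_apply_eq_of_finrank_eq_two hE hv₀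
  have hL (w : ℂ) : L (0, w) = w • v := by simp [← hLv, ← map_smul]
  refine ⟨L, ?_⟩
  simp only [hL]
  exact ⟨not_eventually_eq_zero_smul hconv hfr (mem_ball_self hr) hv hfv,
    not_eventually_eq_zero_smul hconv hgr (mem_ball_self hr) hv hgv⟩

end LinearCoordinates

section LocalSurjectivity

open AnalyticGerm

variable {E : Type*} [NormedAddCommGroup E] [NormedSpace ℂ E] {f g : E → ℂ} {x : E}

lemma not_eventually_eq_zero_of_isRelPrime {hf : AnalyticAt ℂ f x} {hg : AnalyticAt ℂ g x}
    (hfg : IsRelPrime (of f hf) (of g hg)) (hgx : g x = 0) : ¬ ∀ᶠ z in 𝓝 x, f z = 0 := fun h ↦ by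
  rw [of_eq_zero_iff.2 h, isRelPrime_zero_left, isUnit_iff_value_ne_zero] at hfg
  exact hfg hgx

lemma isRelPrime_of_iff {hf : AnalyticAt ℂ f x} {hg : AnalyticAt ℂ g x} :
    IsRelPrime (of f hf) (of g hg) ↔ ∀ d q r : E → ℂ, AnalyticAt ℂ d x → AnalyticAt ℂ q x →
      AnalyticAt ℂ r x → (f =ᶠ[𝓝 x] fun z ↦ d z * q z) → (g =ᶠ[𝓝 x] fun z ↦ d z * r z) →
        d x ≠ 0 := by
  refine ⟨fun h d q r hd hq hr hfd hgd ↦ ?_, fun h a ↦ ?_⟩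
  · exact isUnit_iff_value_ne_zero.1 <| @h (of d hd)
      ⟨of q hq, (of_eq_of_iff (hg := hd.fun_mul hq)).2 hfd⟩
      ⟨of r hr, (of_eq_of_iff (hg := hd.fun_mul hr)).2 hgd⟩
  · obtain ⟨d, hd, rfl⟩ := exists_eq_of a
    rintro ⟨b, hb⟩ ⟨c, hc⟩
    obtain ⟨q, hq, rfl⟩ := exists_eq_of b
    obtain ⟨r, hr, rfl⟩ := exists_eq_of c
    exact isUnit_iff_value_ne_zero.2 <|
      h d q r hd hq hr ((of_eq_of_iff (hg := hd.fun_mul hq)).1 hb)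
        ((of_eq_of_iff (hg := hd.fun_mul hr)).1 hc)

lemma isRelPrime_comp_continuousLinearEquiv {F : Type*} [NormedAddCommGroup F] [NormedSpace ℂ F]
    {f g : F → ℂ} {hf : AnalyticAt ℂ f 0} {hg : AnalyticAt ℂ g 0}
    (hfg : IsRelPrime (of f hf) (of g hg)) (L : E ≃L[ℂ] F) :
    IsRelPrime (of (f ∘ L) (hf.comp_of_eq (L.analyticAt 0) (map_zero L)))
      (of (g ∘ L) (hg.comp_of_eq (L.analyticAt 0) (map_zero L))) := by
  refine .of_map (pullback L.symm (L.symm.analyticAt 0) (map_zero L.symm)) ?_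
  simpa [pullback_of, comp_assoc] using hfg

theorem nhds_le_map_of_isRelPrime (hE : Module.finrank ℂ E = 2) {hf : AnalyticAt ℂ f 0}
    {hg : AnalyticAt ℂ g 0} (hf₀ : f 0 = 0) (hg₀ : g 0 = 0)
    (hfg : IsRelPrime (of f hf) (of g hg)) : 𝓝 0 ≤ map (fun z ↦ (f z, g z)) (𝓝 0) := by
  obtain ⟨L, hfL, hgL⟩ := exists_continuousLinearEquiv_not_eventually_eq_zero hE hf hg hf₀
    (not_eventually_eq_zero_of_isRelPrime hfg hg₀)
    (not_eventually_eq_zero_of_isRelPrime hfg.symm hf₀)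
  have hmap : map (fun p ↦ ((f ∘ L) p, (g ∘ L) p)) (𝓝 0) = map (fun z ↦ (f z, g z)) (𝓝 0) := by
    rw [← map_zero L, ← L.map_nhds_eq, map_map]
    rfl
  rw [← hmap]
  exact nhds_le_map_of_isolated_zero (hf.comp_of_eq (L.analyticAt 0) (map_zero L))
    (hg.comp_of_eq (L.analyticAt 0) (map_zero L)) (by simpa using hf₀) (by simpa using hg₀) hfL
    (eventually_eq_zero_of_isRelPrime hfL hgL (isRelPrime_comp_continuousLinearEquiv hfg L))

end LocalSurjectivity

end HolomorphicPair

open HolomorphicPair in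
theorem pair_locally_surjective_general {E : Type*} [NormedAddCommGroup E] [NormedSpace ℂ E]
    (hE : Module.finrank ℂ E = 2) (f g : E → ℂ) (U : Set E) (hU : U ∈ nhds 0)
    (hfa : DifferentiableOn ℂ f U) (hga : DifferentiableOn ℂ g U)
    (hf0 : f 0 = 0) (hg0 : g 0 = 0)
    (hnocommon : ∀ d q r : E → ℂ, AnalyticAt ℂ d 0 → AnalyticAt ℂ q 0 → AnalyticAt ℂ r 0 →
      (f =ᶠ[nhds 0] fun z ↦ d z * q z) → (g =ᶠ[nhds 0] fun z ↦ d z * r z) → d 0 ≠ 0) :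
    ∀ W ∈ nhds (0 : E), (fun z ↦ (f z, g z)) '' W ∈ nhds ((0, 0) : ℂ × ℂ) := by
  have hf : AnalyticAt ℂ f 0 := analyticAt_of_differentiableOn_of_finrank_eq_two hE hU hfa
  have hg : AnalyticAt ℂ g 0 := analyticAt_of_differentiableOn_of_finrank_eq_two hE hU hga
  have hfg : IsRelPrime (AnalyticGerm.of f hf) (AnalyticGerm.of g hg) :=
    isRelPrime_of_iff.2 hnocommon
  exact fun W hW ↦ nhds_le_map_of_isRelPrime hE hf0 hg0 hfg (image_mem_map hW)

/-- For holomorphic germs `f, g : (ℂ², 0) → (ℂ, 0)`, neither constant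
and with no common irreducible factor, the map-germ `(f, g) : ℂ² → ℂ²` is locally
surjective at `0`. -/
theorem pair_locally_surjective
    (f g : EuclideanSpace ℂ (Fin 2) → ℂ)
    (U : Set (EuclideanSpace ℂ (Fin 2))) (hU : U ∈ nhds (0 : EuclideanSpace ℂ (Fin 2)))
    (hfa : DifferentiableOn ℂ f U) (hga : DifferentiableOn ℂ g U)
    (hf0 : f 0 = 0) (hg0 : g 0 = 0)
    (hfnc : ¬ ∀ᶠ z in nhds (0 : EuclideanSpace ℂ (Fin 2)), f z = 0)
    (hgnc : ¬ ∀ᶠ z in nhds (0 : EuclideanSpace ℂ (Fin 2)), g z = 0)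
    -- no common (irreducible) factor in the ring of germs of holomorphic functions at 0 :
    (hnocommon : ∀ (d q r : EuclideanSpace ℂ (Fin 2) → ℂ),
      AnalyticAt ℂ d 0 → AnalyticAt ℂ q 0 → AnalyticAt ℂ r 0 →
      (f =ᶠ[nhds 0] fun z => d z * q z) → (g =ᶠ[nhds 0] fun z => d z * r z) → d 0 ≠ 0) :
    ∀ W ∈ nhds (0 : EuclideanSpace ℂ (Fin 2)),
      (fun z => (f z, g z)) '' W ∈ nhds ((0, 0) : ℂ × ℂ) :=
  pair_locally_surjective_general finrank_euclideanSpace_fin f g U hU hfa hga hf0 hg0 hnocommon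
end
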